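/- arXiv:2409.15258 — 3 statements merged into one kernel-verified Lean document; each statement's English description precedes it below -/
import Mathlib

section
/- Let 0 < α < 1/2 and let n be such that α²n ≥ 7 and αn > 220. Then every n-vertex rainbow K_4-saturated graph has at least (7/2)n − 8αn edges. -/
open SimpleGraph

/-- A proper edge-coloring of `G`: distinct edges sharing a vertex get distinct colors. -/
def IsProperEdgeColoring {V : Type} (G : SimpleGraph V) (c : Sym2 V → ℕ) : Prop :=
  ∀ e₁ ∈ G.edgeSet, ∀ e₂ ∈ G.edgeSet, e₁ ≠ e₂ → (∃ v, v ∈ e₁ ∧ v ∈ e₂) → c e₁ ≠ c e₂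

/-- `G` contains a rainbow copy of `H` under the edge-coloring `c`. -/
def HasRainbowCopy {V W : Type} (G : SimpleGraph V) (H : SimpleGraph W)
    (c : Sym2 V → ℕ) : Prop :=
  ∃ f : W → V, Function.Injective f ∧ (∀ a b, H.Adj a b → G.Adj (f a) (f b)) ∧
    ∀ e₁ ∈ H.edgeSet, ∀ e₂ ∈ H.edgeSet, e₁ ≠ e₂ → c (Sym2.map f e₁) ≠ c (Sym2.map f e₂)

/-- `G` is (properly) rainbow `H`-saturated. -/
def IsRainbowSat {V W : Type} (G : SimpleGraph V) (H : SimpleGraph W) : Prop :=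
  (∃ c : Sym2 V → ℕ, IsProperEdgeColoring G c ∧ ¬ HasRainbowCopy G H c) ∧
  ∀ u v : V, u ≠ v → ¬ G.Adj u v →
    ∀ c : Sym2 V → ℕ,
      IsProperEdgeColoring (G ⊔ SimpleGraph.fromEdgeSet {s(u, v)}) c →
      HasRainbowCopy (G ⊔ SimpleGraph.fromEdgeSet {s(u, v)}) H c

/-!
Colour the edges in no `K₄` with private colours. By saturation, if two non-adjacent vertices both
miss a colour `γ`, then joining them by an edge of colour `γ` creates a rainbow `K₄`, whose other
two vertices `p`, `q` form an edge of the common neighbourhood. A colour can be freed at a vertex by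
recolouring an edge there, whenever this leaves all copies of `K₄` non-rainbow; doing so at two
non-adjacent vertices at once rules out many local configurations.

Two configurations matter. Non-adjacent vertices of degree three have the same neighbourhood, which
is a triangle, so there are at most three of them in an independent set. In a book with spine `bd`,
the edges between pages carry either the colour of `bd` or a natural orientation, and each page is
on at most one edge of the former kind and is the head and the tail of at most one edge of the
latter. An edge between pages gives weight `1` to both ends in the first case and `2` to its tail
in the second, an edge leaving the book gives `2` to its page. After moving some weight between
pages, all but boundedly many have weight at least `3`. Together with the two edges to the spine
this gives `7 * #pages ≤ ∑ v, deg v + O(1)`.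

Finally put `t = α * n` and call a vertex high if its degree is at least about `t`. By saturation
every non-neighbour of `v` is adjacent to two adjacent neighbours of `v`. If `deg v` plus the number
of high neighbours of `v` is at most six, counting these edges shows that either two adjacent high
neighbours span a book with `n - O(t)` pages, to which the bound above applies, or `v` has degree
three and no low neighbours, which happens for at most three `v`. If there is no such book, summing
over the low vertices gives `7 * n ≤ ∑ v, deg v + O(t)`, since the hypothesis `7 ≤ α ^ 2 * n` keeps
the number of high vertices of order `t`.
-/

namespace RainbowK4

open Finset
open scoped Classical

variable {V : Type} {α β : Type*} {G : SimpleGraph V} {a b p q u v w x y : V}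

/-- The vertices `a, b, p, q` span a copy of `K₄` in `G`. -/
def IsK4 (G : SimpleGraph V) (a b p q : V) : Prop :=
  G.Adj a b ∧ G.Adj a p ∧ G.Adj a q ∧ G.Adj b p ∧ G.Adj b q ∧ G.Adj p q

/-- Two opposite edges of the quadrilateral `a, b, p, q` have the same colour. For a proper
colouring this says exactly that a copy of `K₄` on these vertices is not rainbow. -/
def HasMonoMatching (c : Sym2 V → α) (a b p q : V) : Prop :=
  c s(a, b) = c s(p, q) ∨ c s(a, p) = c s(b, q) ∨ c s(a, q) = c s(b, p)

/-- Every copy of `K₄` in `G` has a monochromatic perfect matching. -/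
def NoRainbowK4 (G : SimpleGraph V) (c : Sym2 V → α) : Prop :=
  ∀ ⦃a b p q⦄, IsK4 G a b p q → HasMonoMatching c a b p q

/-- A proper edge-colouring of `G` without rainbow copies of `K₄`, with colours in any type.
Properness is expressed as injectivity of the colouring at each vertex. -/
structure IsRainbowK4Free (G : SimpleGraph V) (c : Sym2 V → α) : Prop where
  proper : ∀ ⦃a b d⦄, G.Adj a b → G.Adj a d → c s(a, b) = c s(a, d) → b = d
  noRainbow : NoRainbowK4 G c

lemma color_swap (c : Sym2 V → α) (x y : V) : c s(x, y) = c s(y, x) := by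
  rw [Sym2.eq_swap]

lemma IsK4.swap_left (h : IsK4 G a b p q) : IsK4 G b a p q := by
  grind [IsK4, G.adj_comm]

lemma IsK4.swap_pairs (h : IsK4 G a b p q) : IsK4 G p q a b := by
  grind [IsK4, G.adj_comm]

lemma IsK4.swap_middle (h : IsK4 G a b p q) : IsK4 G a p b q := by
  grind [IsK4, G.adj_comm]

lemma IsK4.adj (h : IsK4 G a b p q) (hx : x ∈ ({a, b, p, q} : Set V))
    (hy : y ∈ ({a, b, p, q} : Set V)) (hxy : x ≠ y) : G.Adj x y := by
  simp only [Set.mem_insert_iff, Set.mem_singleton_iff] at hx hy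
  grind [IsK4, G.adj_comm]

lemma HasMonoMatching.congr {c : Sym2 V → α} {c' : Sym2 V → β} (h : HasMonoMatching c a b p q)
    (hcc' : ∀ e e' : Sym2 V, c e = c e' → c' e = c' e') : HasMonoMatching c' a b p q :=
  h.imp (hcc' _ _) (Or.imp (hcc' _ _) (hcc' _ _))

lemma NoRainbowK4.congr {c : Sym2 V → α} {c' : Sym2 V → β} (h : NoRainbowK4 G c)
    (hcc' : ∀ e e' : Sym2 V, c e = c e' → c' e = c' e') : NoRainbowK4 G c' :=
  fun _ _ _ _ hK => (h hK).congr hcc'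

lemma HasMonoMatching.swap_left {c : Sym2 V → α} (h : HasMonoMatching c a b p q) :
    HasMonoMatching c b a p q := by
  grind [HasMonoMatching, Sym2.eq_swap]

lemma HasMonoMatching.swap_pairs {c : Sym2 V → α} (h : HasMonoMatching c a b p q) :
    HasMonoMatching c p q a b := by
  grind [HasMonoMatching, Sym2.eq_swap]

lemma HasMonoMatching.swap_middle {c : Sym2 V → α} (h : HasMonoMatching c a b p q) :
    HasMonoMatching c a p b q := by
  grind [HasMonoMatching, Sym2.eq_swap]

lemma IsRainbowK4Free.color_ne_of_triangle {c : Sym2 V → α} (hc : IsRainbowK4Free G c)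
    (hvx : G.Adj v x) (hvy : G.Adj v y) (hxy : G.Adj x y) : c s(v, x) ≠ c s(x, y) := fun heq =>
  hvy.ne (hc.proper hvx.symm hxy (by rw [Sym2.eq_swap, heq]))

lemma IsRainbowK4Free.comp_injective {c : Sym2 V → α} (hc : IsRainbowK4Free G c) {f : α → β}
    (hf : f.Injective) : IsRainbowK4Free G (f ∘ c) where
  proper _ _ _ hab had h := hc.proper hab had (hf h)
  noRainbow := hc.noRainbow.congr fun _ _ h => congrArg f h

lemma IsRainbowK4Free.isProperEdgeColoring {c : Sym2 V → ℕ} (hc : IsRainbowK4Free G c) :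
    IsProperEdgeColoring G c := by
  rintro e₁ h₁ e₂ h₂ hne ⟨v, hv₁, hv₂⟩ heq
  obtain ⟨a, rfl⟩ := Sym2.mem_iff_exists.1 hv₁
  obtain ⟨b, rfl⟩ := Sym2.mem_iff_exists.1 hv₂
  exact hne (congrArg _ (hc.proper h₁ h₂ heq))

lemma NoRainbowK4.not_hasRainbowCopy {c : Sym2 V → ℕ} (hc : NoRainbowK4 G c) :
    ¬ HasRainbowCopy G (⊤ : SimpleGraph (Fin 4)) c := by
  rintro ⟨f, -, hadj, hrainbow⟩
  have hK : IsK4 G (f 0) (f 1) (f 2) (f 3) := by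
    refine ⟨?_, ?_, ?_, ?_, ?_, ?_⟩ <;> exact hadj _ _ (by decide)
  rcases hc hK with h | h | h
  · exact hrainbow s(0, 1) (by simp) s(2, 3) (by simp) (by decide) h
  · exact hrainbow s(0, 2) (by simp) s(1, 3) (by simp) (by decide) h
  · exact hrainbow s(0, 3) (by simp) s(1, 2) (by simp) (by decide) h

lemma injective_at_of_isProperEdgeColoring {c : Sym2 V → ℕ} (hc : IsProperEdgeColoring G c)
    {a b d : V} (hab : G.Adj a b) (had : G.Adj a d) (h : c s(a, b) = c s(a, d)) : b = d := by
  by_contra hbd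
  exact hc s(a, b) hab s(a, d) had (fun he => hbd (Sym2.congr_right.1 he)) ⟨a, by simp⟩ h

lemma hasMonoMatching_of_not_hasRainbowCopy {c : Sym2 V → ℕ} (hc : IsProperEdgeColoring G c)
    (hc' : ¬ HasRainbowCopy G (⊤ : SimpleGraph (Fin 4)) c) (hK : IsK4 G a b p q) :
    HasMonoMatching c a b p q := by
  set f : Fin 4 → V := ![a, b, p, q] with hf
  have hadj : ∀ i j, (⊤ : SimpleGraph (Fin 4)).Adj i j → G.Adj (f i) (f j) := by
    obtain ⟨h₁, h₂, h₃, h₄, h₅, h₆⟩ := hK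
    intro i j hij
    fin_cases i <;> fin_cases j <;> simp_all [G.adj_comm]
  have hinj : Function.Injective f := by
    intro i j hij
    by_contra hne
    exact (hadj i j hne).ne hij
  by_contra hno
  refine hc' ⟨f, hinj, hadj, fun e₁ h₁ e₂ h₂ hne heq => ?_⟩
  by_cases hmeet : ∃ i, i ∈ e₁ ∧ i ∈ e₂
  · obtain ⟨i, hi₁, hi₂⟩ := hmeet
    obtain ⟨j, rfl⟩ := Sym2.mem_iff_exists.1 hi₁
    obtain ⟨k, rfl⟩ := Sym2.mem_iff_exists.1 hi₂
    exact hne (congrArg _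
      (hinj (injective_at_of_isProperEdgeColoring hc (hadj i j h₁) (hadj i k h₂) heq)))
  · have hopp : ∀ e₁ e₂ : Sym2 (Fin 4), ¬ e₁.IsDiag → ¬ e₂.IsDiag → (¬ ∃ i, i ∈ e₁ ∧ i ∈ e₂) →
        (e₁ = s(0, 1) ∧ e₂ = s(2, 3) ∨ e₁ = s(2, 3) ∧ e₂ = s(0, 1)) ∨
        (e₁ = s(0, 2) ∧ e₂ = s(1, 3) ∨ e₁ = s(1, 3) ∧ e₂ = s(0, 2)) ∨
        (e₁ = s(0, 3) ∧ e₂ = s(1, 2) ∨ e₁ = s(1, 2) ∧ e₂ = s(0, 3)) := by decide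
    have h := hopp e₁ e₂ (not_isDiag_of_mem_edgeSet _ h₁) (not_isDiag_of_mem_edgeSet _ h₂) hmeet
    apply hno
    rcases h with (⟨rfl, rfl⟩ | ⟨rfl, rfl⟩) | (⟨rfl, rfl⟩ | ⟨rfl, rfl⟩) | ⟨rfl, rfl⟩ | ⟨rfl, rfl⟩
    · exact .inl heq
    · exact .inl heq.symm
    · exact .inr (.inl heq)
    · exact .inr (.inl heq.symm)
    · exact .inr (.inr heq)
    · exact .inr (.inr heq.symm)

lemma IsRainbowK4Free.of_not_hasRainbowCopy {c : Sym2 V → ℕ} (hc : IsProperEdgeColoring G c)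
    (hc' : ¬ HasRainbowCopy G (⊤ : SimpleGraph (Fin 4)) c) : IsRainbowK4Free G c where
  proper _ _ _ hab had h := injective_at_of_isProperEdgeColoring hc hab had h
  noRainbow _ _ _ _ hK := hasMonoMatching_of_not_hasRainbowCopy hc hc' hK

/-- The colour `γ` does not occur on the edges of `G` at `y`. -/
def Misses (G : SimpleGraph V) (c : Sym2 V → α) (y : V) (γ : α) : Prop :=
  ∀ ⦃x⦄, G.Adj y x → c s(y, x) ≠ γ

lemma IsK4.exists_relabel (hK : IsK4 G a b p q) (hx : x ∈ ({a, b, p, q} : Set V))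
    (hy : y ∈ ({a, b, p, q} : Set V)) (hxy : x ≠ y) (c : Sym2 V → α) :
    ∃ z w, IsK4 G x y z w ∧ (HasMonoMatching c x y z w → HasMonoMatching c a b p q) := by
  simp only [Set.mem_insert_iff, Set.mem_singleton_iff] at hx hy
  obtain rfl | rfl | rfl | rfl := hx <;> obtain rfl | rfl | rfl | rfl := hy <;>
    first
    | exact absurd rfl hxy
    | exact ⟨_, _, hK, id⟩
    | exact ⟨_, _, hK.swap_left, (·.swap_left)⟩
    | exact ⟨_, _, hK.swap_middle, (·.swap_middle)⟩
    | exact ⟨_, _, hK.swap_pairs, (·.swap_pairs)⟩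
    | exact ⟨_, _, hK.swap_left.swap_middle, (·.swap_middle.swap_left)⟩
    | exact ⟨_, _, hK.swap_middle.swap_left, (·.swap_left.swap_middle)⟩
    | exact ⟨_, _, hK.swap_middle.swap_pairs, (·.swap_pairs.swap_middle)⟩
    | exact ⟨_, _, hK.swap_pairs.swap_left, (·.swap_left.swap_pairs)⟩
    | exact ⟨_, _, hK.swap_left.swap_middle.swap_left, (·.swap_left.swap_middle.swap_left)⟩
    | exact ⟨_, _, hK.swap_middle.swap_pairs.swap_left, (·.swap_left.swap_pairs.swap_middle)⟩
    | exact ⟨_, _, hK.swap_pairs.swap_left.swap_middle, (·.swap_middle.swap_left.swap_pairs)⟩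
    | exact ⟨_, _, hK.swap_pairs.swap_left.swap_middle.swap_left,
        (·.swap_left.swap_middle.swap_left.swap_pairs)⟩

lemma sup_edge_adj : (G ⊔ fromEdgeSet {s(u, v)}).Adj x y ↔
    G.Adj x y ∨ s(x, y) = s(u, v) ∧ x ≠ y := by
  simp only [sup_adj, fromEdgeSet_adj, Set.mem_singleton_iff]

lemma IsK4.mem_of_sup_edge (hK : IsK4 (G ⊔ fromEdgeSet {s(u, v)}) x y p q)
    (hK' : ¬ IsK4 G x y p q) :
    u ∈ ({x, y, p, q} : Set V) ∧ v ∈ ({x, y, p, q} : Set V) ∧ u ≠ v := by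
  by_contra hnew
  have hadj : ∀ i ∈ ({x, y, p, q} : Set V), ∀ j ∈ ({x, y, p, q} : Set V), i ≠ j →
      G.Adj i j := by
    intro i hi j hj hij
    refine (sup_edge_adj.1 (hK.adj hi hj hij)).resolve_right ?_
    rintro ⟨he, -⟩
    rcases Sym2.eq_iff.1 he with ⟨rfl, rfl⟩ | ⟨rfl, rfl⟩
    exacts [hnew ⟨hi, hj, hij⟩, hnew ⟨hj, hi, hij.symm⟩]
  obtain ⟨h₁, h₂, h₃, h₄, h₅, h₆⟩ := hK
  exact hK' ⟨hadj _ (by simp) _ (by simp) h₁.ne, hadj _ (by simp) _ (by simp) h₂.ne,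
    hadj _ (by simp) _ (by simp) h₃.ne, hadj _ (by simp) _ (by simp) h₄.ne,
    hadj _ (by simp) _ (by simp) h₅.ne, hadj _ (by simp) _ (by simp) h₆.ne⟩

lemma IsRainbowK4Free.sup_edge {c : Sym2 V → α} (hc : IsRainbowK4Free G c) (huv : ¬ G.Adj u v)
    {γ : α} (hu : Misses G c u γ) (hv : Misses G c v γ)
    (h : ∀ p q, IsK4 (G ⊔ fromEdgeSet {s(u, v)}) u v p q →
      HasMonoMatching (Function.update c s(u, v) γ) u v p q) :
    IsRainbowK4Free (G ⊔ fromEdgeSet {s(u, v)}) (Function.update c s(u, v) γ) := by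
  have hold : ∀ x y, G.Adj x y → s(x, y) ≠ s(u, v) := by
    intro x y hxy he
    exact huv (by rwa [← mem_edgeSet, ← he])
  refine ⟨fun x y z hxy hxz heq => ?_, fun x y p q hK => ?_⟩
  · rcases sup_edge_adj.1 hxy with hy | ⟨hy, -⟩ <;> rcases sup_edge_adj.1 hxz with hz | ⟨hz, -⟩
    · rw [Function.update_of_ne (hold _ _ hy), Function.update_of_ne (hold _ _ hz)] at heq
      exact hc.proper hy hz heq
    · rw [Function.update_of_ne (hold _ _ hy), hz, Function.update_self] at heq
      rcases Sym2.eq_iff.1 hz with ⟨rfl, rfl⟩ | ⟨rfl, rfl⟩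
      exacts [absurd heq (hu hy), absurd heq (hv hy)]
    · rw [Function.update_of_ne (hold _ _ hz), hy, Function.update_self] at heq
      rcases Sym2.eq_iff.1 hy with ⟨rfl, rfl⟩ | ⟨rfl, rfl⟩
      exacts [absurd heq.symm (hu hz), absurd heq.symm (hv hz)]
    · exact Sym2.congr_right.1 (hy.trans hz.symm)
  · by_cases hK' : IsK4 G x y p q
    · obtain ⟨h₁, h₂, h₃, h₄, h₅, h₆⟩ := id hK'
      simpa only [HasMonoMatching, Function.update_of_ne (hold _ _ h₁),
        Function.update_of_ne (hold _ _ h₂), Function.update_of_ne (hold _ _ h₃),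
        Function.update_of_ne (hold _ _ h₄), Function.update_of_ne (hold _ _ h₅),
        Function.update_of_ne (hold _ _ h₆)] using hc.noRainbow hK'
    · obtain ⟨hu', hv', hne⟩ := hK.mem_of_sup_edge hK'
      obtain ⟨z, w, hK'', hmono⟩ := hK.exists_relabel hu' hv' hne (Function.update c s(u, v) γ)
      exact hmono (h z w hK'')

lemma exists_rainbow_K4 [Countable α] (hsat : IsRainbowSat G (⊤ : SimpleGraph (Fin 4)))
    {c : Sym2 V → α} (hc : IsRainbowK4Free G c) (hne : u ≠ v) (huv : ¬ G.Adj u v) {γ : α}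
    (hu : Misses G c u γ) (hv : Misses G c v γ) :
    ∃ p q, G.Adj u p ∧ G.Adj u q ∧ G.Adj v p ∧ G.Adj v q ∧ G.Adj p q ∧
      c s(p, q) ≠ γ ∧ c s(u, p) ≠ c s(v, q) ∧ c s(u, q) ≠ c s(v, p) := by
  by_contra! hcon
  obtain ⟨ι, hι⟩ := Countable.exists_injective_nat α
  have hold : ∀ x y, (G ⊔ fromEdgeSet {s(u, v)}).Adj x y → s(x, y) ≠ s(u, v) → G.Adj x y :=
    fun x y hxy he => (sup_edge_adj.1 hxy).resolve_right fun h => he h.1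
  have hfree := hc.sup_edge huv hu hv fun p q ⟨_, hup, huq, hvp, hvq, hpq⟩ => by
    have hup' : s(u, p) ≠ s(u, v) := fun he => hvp.ne (Sym2.congr_right.1 he).symm
    have huq' : s(u, q) ≠ s(u, v) := fun he => hvq.ne (Sym2.congr_right.1 he).symm
    have hvp' : s(v, p) ≠ s(u, v) := fun he =>
      hup.ne (Sym2.congr_right.1 (he.trans Sym2.eq_swap)).symm
    have hvq' : s(v, q) ≠ s(u, v) := fun he =>
      huq.ne (Sym2.congr_right.1 (he.trans Sym2.eq_swap)).symm
    have hpq' : s(p, q) ≠ s(u, v) := by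
      intro he
      rcases Sym2.eq_iff.1 he with ⟨rfl, -⟩ | ⟨rfl, -⟩
      exacts [hup.ne rfl, hvp.ne rfl]
    have := hcon p q (hold _ _ hup hup') (hold _ _ huq huq') (hold _ _ hvp hvp')
      (hold _ _ hvq hvq') (hold _ _ hpq hpq')
    rw [HasMonoMatching, Function.update_self, Function.update_of_ne hup',
      Function.update_of_ne huq', Function.update_of_ne hvp', Function.update_of_ne hvq',
      Function.update_of_ne hpq']
    tauto
  exact (hfree.comp_injective hι).noRainbow.not_hasRainbowCopy
    (hsat.2 u v hne huv _ (hfree.comp_injective hι).isProperEdgeColoring)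

/-- The edges of `G` that lie in a copy of `K₄`. -/
def k4Edges (G : SimpleGraph V) : Set (Sym2 V) :=
  {e | ∃ a b p q, IsK4 G a b p q ∧ e = s(a, b)}

/-- A rainbow-`K₄`-free colouring in which every edge outside all copies of `K₄` has a colour of
its own. (Pairs of non-adjacent vertices carry irrelevant colours, and are treated alike.) -/
structure IsNormalColoring (G : SimpleGraph V) (c : Sym2 V → α) : Prop
    extends IsRainbowK4Free G c where
  eq_of_notMem_k4Edges : ∀ ⦃e e'⦄, e ∉ k4Edges G → c e = c e' → e = e'

lemma IsK4.mem_k4Edges (hK : IsK4 G a b p q) (hx : x ∈ ({a, b, p, q} : Set V))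
    (hy : y ∈ ({a, b, p, q} : Set V)) (hxy : x ≠ y) : s(x, y) ∈ k4Edges G := by
  obtain ⟨z, w, hK', -⟩ := hK.exists_relabel hx hy hxy (id : Sym2 V → Sym2 V)
  exact ⟨x, y, z, w, hK', rfl⟩

lemma HasMonoMatching.congr_on {c c' : Sym2 V → α} (h : HasMonoMatching c a b p q)
    (hcc' : ∀ x ∈ ({a, b, p, q} : Set V), ∀ y ∈ ({a, b, p, q} : Set V), x ≠ y →
      c s(x, y) = c' s(x, y)) (hK : IsK4 G a b p q) : HasMonoMatching c' a b p q := by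
  obtain ⟨hab, hap, haq, hbp, hbq, hpq⟩ := hK
  rwa [HasMonoMatching, hcc' a (by simp) b (by simp) hab.ne, hcc' a (by simp) p (by simp) hap.ne,
    hcc' a (by simp) q (by simp) haq.ne, hcc' b (by simp) p (by simp) hbp.ne,
    hcc' b (by simp) q (by simp) hbq.ne, hcc' p (by simp) q (by simp) hpq.ne] at h

lemma IsRainbowK4Free.exists_isNormalColoring [Finite V] {c : Sym2 V → ℕ}
    (hc : IsRainbowK4Free G c) : ∃ c' : Sym2 V → ℕ, IsNormalColoring G c' := by
  have : Finite (Sym2 V) := Quot.finite _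
  obtain ⟨ι, hι⟩ := Countable.exists_injective_nat (ℕ ⊕ Sym2 V)
  let c' : Sym2 V → ℕ ⊕ Sym2 V := fun e => if e ∈ k4Edges G then .inl (c e) else .inr e
  have hc'_inj : ∀ e e', e ∉ k4Edges G → c' e = c' e' → e = e' := by
    intro e e' he heq
    simp only [c'] at heq
    grind
  have hfree : IsRainbowK4Free G c' := by
    refine ⟨fun a b d hab had heq => ?_, fun a b p q hK => ?_⟩
    · by_cases he : s(a, b) ∈ k4Edges G
      · refine hc.proper hab had ?_
        simp only [c'] at heq
        grind
      · exact Sym2.congr_right.1 (hc'_inj _ _ he heq)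
    · refine HasMonoMatching.congr_on
        ((hc.noRainbow hK).congr fun e e' => congrArg (Sum.inl (β := Sym2 V)))
        (fun x hx y hy hxy => ?_) hK
      exact (if_pos (hK.mem_k4Edges hx hy hxy)).symm
  exact ⟨ι ∘ c', hfree.comp_injective hι, fun e e' he h => hc'_inj e e' he (hι h)⟩

/-- No edges of `F` share an endpoint. -/
def IsMatchingSet (F : Set (Sym2 V)) : Prop :=
  ∀ ⦃a b d⦄, s(a, b) ∈ F → s(a, d) ∈ F → b = d

/-- Giving a new colour to the edges in `F` creates no rainbow `K₄`: every copy of `K₄` has a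
monochromatic perfect matching that lies inside `F` or avoids `F`. -/
def Recolorable (G : SimpleGraph V) (c : Sym2 V → α) (F : Set (Sym2 V)) : Prop :=
  NoRainbowK4 G fun e => (c e, e ∈ F)

/-- The colouring `c` with a new colour `none` given to all pairs in `F`. -/
noncomputable def recolor (c : Sym2 V → α) (F : Set (Sym2 V)) : Sym2 V → Option α :=
  fun e => if e ∈ F then none else some (c e)

lemma IsRainbowK4Free.recolor {c : Sym2 V → α} (hc : IsRainbowK4Free G c) {F : Set (Sym2 V)}
    (hF : Recolorable G c F) (hFm : IsMatchingSet F) : IsRainbowK4Free G (recolor c F) where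
  proper a b d hab had h := by
    simp only [RainbowK4.recolor] at h
    split_ifs at h with hb hd
    · exact hFm hb hd
    · exact hc.proper hab had (Option.some_injective _ h)
  noRainbow := hF.congr fun e e' h => by
    simp only [Prod.mk.injEq] at h
    simp only [RainbowK4.recolor, h]

lemma recolorable_of_forall {c : Sym2 V → α} (hc : NoRainbowK4 G c) {F : Set (Sym2 V)}
    (h : ∀ e ∈ F, ∃ u v, e = s(u, v) ∧
      ∀ p q, IsK4 G u v p q → HasMonoMatching (fun e => (c e, e ∈ F)) u v p q) :
    Recolorable G c F := by
  intro a b p q hK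
  by_cases hmeet : ∃ x ∈ ({a, b, p, q} : Set V), ∃ y ∈ ({a, b, p, q} : Set V),
      x ≠ y ∧ s(x, y) ∈ F
  · obtain ⟨x, hx, y, hy, hxy, hxyF⟩ := hmeet
    obtain ⟨u, v, huv, hmono⟩ := h _ hxyF
    obtain ⟨hu, hv, hne⟩ : u ∈ ({a, b, p, q} : Set V) ∧ v ∈ ({a, b, p, q} : Set V) ∧ u ≠ v := by
      rcases Sym2.eq_iff.1 huv with ⟨rfl, rfl⟩ | ⟨rfl, rfl⟩
      exacts [⟨hx, hy, hxy⟩, ⟨hy, hx, hxy.symm⟩]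
    obtain ⟨z, w, hK', himp⟩ := hK.exists_relabel hu hv hne fun e => (c e, e ∈ F)
    exact himp (hmono z w hK')
  · push Not at hmeet
    refine HasMonoMatching.congr_on ((hc hK).congr fun e e' => congrArg (·, False))
      (fun x hx y hy hxy => ?_) hK
    simpa using hmeet x hx y hy hxy

lemma IsMatchingSet.recolorable {c : Sym2 V → α} {F : Set (Sym2 V)} (hF : IsMatchingSet F)
    (hc : NoRainbowK4 G c)
    (h : ∀ e ∈ F, ∃ u v, e = s(u, v) ∧ ∀ p q, IsK4 G u v p q →
      c s(u, v) = c s(p, q) ∧ s(p, q) ∈ F ∨ c s(u, p) = c s(v, q) ∨ c s(u, q) = c s(v, p)) :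
    Recolorable G c F := by
  refine recolorable_of_forall hc fun e he => ?_
  obtain ⟨u, v, rfl, huv⟩ := h e he
  refine ⟨u, v, rfl, fun p q hK => ?_⟩
  have hu : ∀ x, v ≠ x → s(u, x) ∉ F := fun x hx h => hx (hF he h)
  have hv : ∀ x, u ≠ x → s(v, x) ∉ F := fun x hx h => hx (hF (Sym2.eq_swap ▸ he) h)
  obtain ⟨-, hup, huq, hvp, hvq, -⟩ := id hK
  simpa [HasMonoMatching, he, hu p hvp.ne, hu q hvq.ne, hv p hup.ne, hv q huq.ne] using huv p q hK

lemma isMatchingSet_singleton (v x : V) : IsMatchingSet ({s(v, x)} : Set (Sym2 V)) := by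
  intro a b d hab had
  exact Sym2.congr_right.1 (hab.trans had.symm)

lemma recolorable_singleton {c : Sym2 V → α} (hc : NoRainbowK4 G c)
    (h : ∀ y z, IsK4 G v x y z → c s(v, y) = c s(x, z) ∨ c s(v, z) = c s(x, y)) :
    Recolorable G c {s(v, x)} := by
  refine (isMatchingSet_singleton v x).recolorable hc ?_
  rintro _ rfl
  exact ⟨v, x, rfl, fun y z hK => .inr (h y z hK)⟩

lemma recolorable_singleton_of_notMem_k4Edges {c : Sym2 V → α} (hc : NoRainbowK4 G c)
    (h : s(v, x) ∉ k4Edges G) : Recolorable G c {s(v, x)} :=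
  recolorable_singleton hc fun y z hK => absurd ⟨v, x, y, z, hK, rfl⟩ h

lemma Recolorable.union {c : Sym2 V → α} {F F' : Set (Sym2 V)} (hF : Recolorable G c F)
    (hF' : Recolorable G c F') (h : ∀ e ∈ F, ∀ e' ∈ F', ∃ v ∈ e, ∃ w ∈ e', v ≠ w ∧ ¬ G.Adj v w) :
    Recolorable G c (F ∪ F') := by
  intro a b p q hK
  by_cases hmeet : ∃ x ∈ ({a, b, p, q} : Set V), ∃ y ∈ ({a, b, p, q} : Set V), s(x, y) ∈ F'
  · obtain ⟨x', hx', y', hy', he'⟩ := hmeet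
    refine HasMonoMatching.congr_on (hF' hK) (fun x hx y hy _ => ?_) hK
    suffices s(x, y) ∉ F by simp [this]
    intro he
    obtain ⟨v, hv, w, hw, hvw, hadj⟩ := h _ he _ he'
    refine hadj (hK.adj ?_ ?_ hvw)
    · rcases Sym2.mem_iff.1 hv with rfl | rfl <;> assumption
    · rcases Sym2.mem_iff.1 hw with rfl | rfl <;> assumption
  · push Not at hmeet
    refine HasMonoMatching.congr_on (hF hK) (fun x hx y hy _ => ?_) hK
    simp [hmeet x hx y hy]

section Saturated

variable {c : Sym2 V → ℕ}

lemma exists_of_recolorable (hsat : IsRainbowSat G (⊤ : SimpleGraph (Fin 4)))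
    (hc : IsRainbowK4Free G c) (hne : u ≠ v) (huv : ¬ G.Adj u v) {F : Set (Sym2 V)}
    (hF : Recolorable G c F) (hFm : IsMatchingSet F) {γ : ℕ}
    (hu : ∀ x, G.Adj u x → s(u, x) ∉ F → c s(u, x) ≠ γ)
    (hv : ∀ x, G.Adj v x → s(v, x) ∉ F → c s(v, x) ≠ γ) :
    ∃ p q, G.Adj u p ∧ G.Adj u q ∧ G.Adj v p ∧ G.Adj v q ∧ G.Adj p q ∧
      (s(p, q) ∉ F → c s(p, q) ≠ γ) ∧
      ¬ (s(u, p) ∈ F ∧ s(v, q) ∈ F) ∧ ¬ (s(u, q) ∈ F ∧ s(v, p) ∈ F) := by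
  have hmiss : ∀ w, (∀ x, G.Adj w x → s(w, x) ∉ F → c s(w, x) ≠ γ) →
      Misses G (recolor c F) w (some γ) := by
    intro w hw x hx
    simp only [recolor]
    grind
  obtain ⟨p, q, hup, huq, hvp, hvq, hpq, hγ, h₁, h₂⟩ :=
    exists_rainbow_K4 hsat (hc.recolor hF hFm) hne huv (hmiss u hu) (hmiss v hv)
  refine ⟨p, q, hup, huq, hvp, hvq, hpq, ?_, ?_, ?_⟩
  all_goals simp only [recolor] at hγ h₁ h₂; grind

lemma exists_of_two_recolorable (hsat : IsRainbowSat G (⊤ : SimpleGraph (Fin 4)))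
    (hc : IsRainbowK4Free G c) (hne : v ≠ w) (hvw : ¬ G.Adj v w) (hvx : G.Adj v x)
    (hwy : G.Adj w y) (hxy : x ≠ y) (hrec : Recolorable G c {s(v, x)})
    (hrec' : Recolorable G c {s(w, y)}) {γ : ℕ}
    (hv : ∀ z, G.Adj v z → z ≠ x → c s(v, z) ≠ γ)
    (hw : ∀ z, G.Adj w z → z ≠ y → c s(w, z) ≠ γ) :
    ∃ p q, G.Adj v p ∧ G.Adj v q ∧ G.Adj w p ∧ G.Adj w q ∧ G.Adj p q ∧ c s(p, q) ≠ γ ∧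
      ¬ (p = x ∧ q = y) ∧ ¬ (q = x ∧ p = y) := by
  have hF : Recolorable G c ({s(v, x)} ∪ {s(w, y)}) := by
    refine hrec.union hrec' ?_
    rintro _ rfl _ rfl
    exact ⟨v, by simp, w, by simp, hne, hvw⟩
  have hvy : ¬ v = y := fun h => hvw (h ▸ hwy.symm)
  have hwx : ¬ w = x := fun h => hvw (h ▸ hvx)
  have hFm : IsMatchingSet ({s(v, x)} ∪ {s(w, y)} : Set (Sym2 V)) := by
    intro a b d hab had
    simp only [Set.mem_union, Set.mem_singleton_iff, Sym2.eq_iff] at hab had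
    grind
  obtain ⟨p, q, hvp, hvq, hwp, hwq, hpq, hγ, h₁, h₂⟩ :=
    exists_of_recolorable hsat hc hne hvw hF hFm (γ := γ)
      (fun z hz hzF => hv z hz fun h => hzF (by simp [h]))
      (fun z hz hzF => hw z hz fun h => hzF (by simp [h]))
  refine ⟨p, q, hvp, hvq, hwp, hwq, hpq, hγ ?_, ?_, ?_⟩
  · simp only [Set.mem_union, Set.mem_singleton_iff, Sym2.eq_iff]
    grind [hvp.ne, hvq.ne, hwp.ne, hwq.ne]
  · rintro ⟨rfl, rfl⟩; exact h₁ (by simp)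
  · rintro ⟨rfl, rfl⟩; exact h₂ (by simp)

lemma exists_fresh_color [Finite V] (c : Sym2 V → ℕ) : ∃ γ, ∀ e, c e ≠ γ := by
  have : Finite (Sym2 V) := Quot.finite _
  obtain ⟨M, hM⟩ := (Set.finite_range c).bddAbove
  exact ⟨M + 1, fun e => (Nat.lt_succ_of_le (hM ⟨e, rfl⟩)).ne⟩

lemma exists_adj_common [Finite V] (hsat : IsRainbowSat G (⊤ : SimpleGraph (Fin 4)))
    (hne : u ≠ v) (huv : ¬ G.Adj u v) :
    ∃ p q, G.Adj u p ∧ G.Adj u q ∧ G.Adj v p ∧ G.Adj v q ∧ G.Adj p q := by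
  obtain ⟨c, hc, hc'⟩ := hsat.1
  obtain ⟨γ, hγ⟩ := exists_fresh_color c
  obtain ⟨p, q, hup, huq, hvp, hvq, hpq, -⟩ :=
    exists_rainbow_K4 hsat (.of_not_hasRainbowCopy hc hc') hne huv
      (fun _ _ => hγ _) (fun _ _ => hγ _)
  exact ⟨p, q, hup, huq, hvp, hvq, hpq⟩

/-- The only edge in the common neighbourhood of `v` and `w` is `xy`. -/
def UniqueCommonEdge (G : SimpleGraph V) (v w x y : V) : Prop :=
  ∀ ⦃p q⦄, G.Adj v p → G.Adj v q → G.Adj w p → G.Adj w q → G.Adj p q → s(p, q) = s(x, y)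

-- Recolouring `vx` and `wy` alike kills the only new `K₄`.
lemma UniqueCommonEdge.not_recolorable [Finite V] (h : UniqueCommonEdge G v w x y)
    (hsat : IsRainbowSat G (⊤ : SimpleGraph (Fin 4))) (hc : IsRainbowK4Free G c) (hne : v ≠ w)
    (hvw : ¬ G.Adj v w) (hvx : G.Adj v x) (hwy : G.Adj w y) (hxy : x ≠ y)
    (hrec : Recolorable G c {s(v, x)}) : ¬ Recolorable G c {s(w, y)} := by
  intro hrec'
  obtain ⟨γ, hγ⟩ := exists_fresh_color c
  obtain ⟨p, q, hvp, hvq, hwp, hwq, hpq, -, h₁, h₂⟩ :=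
    exists_of_two_recolorable hsat hc hne hvw hvx hwy hxy hrec hrec'
      (fun z _ _ => hγ s(v, z)) (fun z _ _ => hγ s(w, z))
  rcases Sym2.eq_iff.1 (h hvp hvq hwp hwq hpq) with ⟨hp, hq⟩ | ⟨hp, hq⟩
  exacts [h₁ ⟨hp, hq⟩, h₂ ⟨hq, hp⟩]

-- Recolouring `vt` and `wt'` makes room for the colour of `xy` at both `v` and `w`.
lemma UniqueCommonEdge.not_recolorable_third (h : UniqueCommonEdge G v w x y)
    (hsat : IsRainbowSat G (⊤ : SimpleGraph (Fin 4))) (hc : IsRainbowK4Free G c) (hne : v ≠ w)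
    (hvw : ¬ G.Adj v w) (hxy : G.Adj x y) {t t' : V}
    (hNv : ∀ z, G.Adj v z ↔ z = x ∨ z = y ∨ z = t) (hNw : ∀ z, G.Adj w z ↔ z = x ∨ z = y ∨ z = t')
    (htt' : t ≠ t') (hrec : Recolorable G c {s(v, t)}) : ¬ Recolorable G c {s(w, t')} := by
  intro hrec'
  have hmiss : ∀ u t, (∀ z, G.Adj u z ↔ z = x ∨ z = y ∨ z = t) →
      ∀ z, G.Adj u z → z ≠ t → c s(u, z) ≠ c s(x, y) := by
    intro u t hu z hz hzt
    have hux : G.Adj u x := by simp [hu]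
    have huy : G.Adj u y := by simp [hu]
    rcases (hu z).1 hz with rfl | rfl | rfl
    · exact hc.color_ne_of_triangle hux huy hxy
    · exact color_swap c x z ▸ hc.color_ne_of_triangle huy hux hxy.symm
    · exact absurd rfl hzt
  obtain ⟨p, q, hvp, hvq, hwp, hwq, hpq, hγ, -⟩ :=
    exists_of_two_recolorable hsat hc hne hvw (by simp [hNv]) (by simp [hNw]) htt' hrec hrec'
      (hmiss v t hNv) (hmiss w t' hNw)
  exact hγ (congrArg c (h hvp hvq hwp hwq hpq))

end Saturated

section DegreeThree

variable [Fintype V] {c : Sym2 V → ℕ}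

lemma exists_third_neighbor (hv : G.degree v = 3) (hx : G.Adj v x) (hy : G.Adj v y)
    (hxy : x ≠ y) : ∃ t, t ≠ x ∧ t ≠ y ∧ ∀ z, G.Adj v z ↔ z = x ∨ z = y ∨ z = t := by
  have hsub : {x, y} ⊆ G.neighborFinset v := by
    simp [Finset.insert_subset_iff, hx, hy]
  obtain ⟨t, ht⟩ := Finset.card_eq_one.1
    (show #(G.neighborFinset v \ {x, y}) = 1 by
      rw [card_sdiff_of_subset hsub, card_neighborFinset_eq_degree, hv, card_pair hxy])
  have hmem : ∀ z, (G.Adj v z ∧ z ≠ x ∧ z ≠ y) ↔ z = t := fun z => by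
    simpa using Finset.ext_iff.1 ht z
  have ht' := (hmem t).2 rfl
  refine ⟨t, ht'.2.1, ht'.2.2, fun z => ?_⟩
  have := hmem z
  grind

lemma exists_forall_recolorable_of_degree_eq_three (hc : NoRainbowK4 G c) (hv : G.degree v = 3) :
    ∃ z, ∀ w, G.Adj v w → w ≠ z → Recolorable G c {s(v, w)} := by
  by_cases hK : ∃ p q s, IsK4 G v p q s
  · have key : ∀ p q s, IsK4 G v p q s → c s(v, p) = c s(q, s) →
        ∀ w, G.Adj v w → w ≠ p → Recolorable G c {s(v, w)} := by
      intro p q s hK hps w hw hwp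
      obtain ⟨t, -, -, ht⟩ := exists_third_neighbor hv hK.1 hK.2.1 hK.2.2.2.1.ne
      obtain ⟨-, -, hs, -, hps', hqs⟩ := hK
      refine recolorable_singleton hc fun y z hK' => ?_
      obtain ⟨-, hy, hz, hwy, hwz, hyz⟩ := hK'
      rw [ht] at hw hs hy hz
      have := color_swap c
      grind [hps'.ne, hqs.ne, hwy.ne, hwz.ne, hyz.ne]
    obtain ⟨p, q, s, hK⟩ := hK
    rcases hc hK with h | h | h
    · exact ⟨p, key p q s hK h⟩
    · exact ⟨q, key q p s hK.swap_middle h⟩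
    · exact ⟨s, key s p q (by grind [IsK4, G.adj_comm]) h⟩
  · push Not at hK
    exact ⟨v, fun w _ _ => recolorable_singleton hc fun y z h => absurd h (hK w y z)⟩

lemma neighborSet_eq_of_degree_eq_three (hsat : IsRainbowSat G (⊤ : SimpleGraph (Fin 4)))
    (hv : G.degree v = 3) (hw : G.degree w = 3) (hne : v ≠ w) (hvw : ¬ G.Adj v w) :
    G.neighborSet v = G.neighborSet w := by
  obtain ⟨c, hc, hc'⟩ := hsat.1
  have hc := IsRainbowK4Free.of_not_hasRainbowCopy hc hc'
  obtain ⟨x, y, hvx, hvy, hwx, hwy, hxy⟩ := exists_adj_common hsat hne hvw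
  obtain ⟨t, htx, hty, hNv⟩ := exists_third_neighbor hv hvx hvy hxy.ne
  obtain ⟨t', htx', hty', hNw⟩ := exists_third_neighbor hw hwx hwy hxy.ne
  suffices t = t' by
    ext z
    simp only [mem_neighborSet, hNv, hNw, this]
  by_contra htt'
  have hcommon : UniqueCommonEdge G v w x y := by
    intro p q hvp hvq hwp hwq hpq
    rw [hNv] at hvp hvq
    rw [hNw] at hwp hwq
    rw [Sym2.eq_iff]
    grind [hpq.ne]
  have hcommon' : UniqueCommonEdge G v w y x := by rwa [UniqueCommonEdge, Sym2.eq_swap]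
  have hvx_wy := hcommon.not_recolorable hsat hc hne hvw hvx hwy hxy.ne
  have hvy_wx := hcommon'.not_recolorable hsat hc hne hvw hvy hwx hxy.ne'
  have hvt_wt' := hcommon.not_recolorable_third hsat hc hne hvw hxy hNv hNw htt'
  obtain ⟨z, hz⟩ := exists_forall_recolorable_of_degree_eq_three hc.noRainbow hv
  obtain ⟨z', hz'⟩ := exists_forall_recolorable_of_degree_eq_three hc.noRainbow hw
  have hvt : G.Adj v t := by simp [hNv]
  have hwt' : G.Adj w t' := by simp [hNw]
  by_cases hzx : z = x
  · have hz'x : z' = x := by_contra fun h =>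
      hvy_wx (hz y hvy (hzx ▸ hxy.ne')) (hz' x hwx (Ne.symm h))
    exact hvt_wt' (hz t hvt (hzx ▸ htx)) (hz' t' hwt' (hz'x ▸ htx'))
  · have hz'y : z' = y := by_contra fun h =>
      hvx_wy (hz x hvx (Ne.symm hzx)) (hz' y hwy (Ne.symm h))
    have hzy : z = y := by_contra fun h =>
      hvy_wx (hz y hvy (Ne.symm h)) (hz' x hwx (hz'y ▸ hxy.ne))
    exact hvt_wt' (hz t hvt (hzy ▸ hty)) (hz' t' hwt' (hz'y ▸ hty'))

lemma isClique_neighborSet_of_degree_eq_three (hsat : IsRainbowSat G (⊤ : SimpleGraph (Fin 4)))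
    (hv : G.degree v = 3) (hw : G.degree w = 3) (hne : v ≠ w) (hvw : ¬ G.Adj v w) :
    G.IsClique (G.neighborSet v) := by
  obtain ⟨c, hc, hc'⟩ := hsat.1
  obtain ⟨c, hc⟩ := (IsRainbowK4Free.of_not_hasRainbowCopy hc hc').exists_isNormalColoring
  have hN := neighborSet_eq_of_degree_eq_three hsat hv hw hne hvw
  intro q hvq s hvs hqs
  by_contra hqs'
  obtain ⟨p, hpq, -, hNv⟩ := exists_third_neighbor hv hvq hvs hqs
  have hNw : ∀ z, G.Adj w z ↔ z = q ∨ z = s ∨ z = p := fun z => by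
    rw [← hNv, ← mem_neighborSet, ← mem_neighborSet, hN]
  have hvp : G.Adj v p := by simp [hNv]
  have hwq : G.Adj w q := by simp [hNw]
  -- `v` and `w` lie in no copy of `K₄`, so the colours of their edges are unique.
  have hnotK4 : ∀ u, (∀ z, G.Adj u z ↔ z = q ∨ z = s ∨ z = p) → ∀ z, s(u, z) ∉ k4Edges G := by
    have hno : ∀ u, (∀ z, G.Adj u z ↔ z = q ∨ z = s ∨ z = p) → ∀ x y t, ¬ IsK4 G u x y t := by
      rintro u hu x y t ⟨hux, huy, hut, hxy, hxt, hyt⟩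
      rw [hu] at hux huy hut
      grind [hxy.ne, hxt.ne, hyt.ne, G.adj_comm]
    rintro u hu z ⟨a, b, d, e, hK, he⟩
    rcases Sym2.eq_iff.1 he with ⟨rfl, rfl⟩ | ⟨rfl, rfl⟩
    exacts [hno _ hu _ _ _ hK, hno _ hu _ _ _ hK.swap_left]
  have hmiss : ∀ u, (∀ z, G.Adj u z ↔ z = q ∨ z = s ∨ z = p) → ∀ z, c s(u, z) ≠ c s(p, s) := by
    intro u hu z heq
    have := hc.eq_of_notMem_k4Edges (hnotK4 u hu z) heq
    have hup : G.Adj u p := by simp [hu]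
    have hus : G.Adj u s := by simp [hu]
    rw [Sym2.eq_iff] at this
    grind [hup.ne, hus.ne]
  obtain ⟨a, b, hva, hvb, hwa, hwb, hab, hγ, h₁, h₂⟩ :=
    exists_of_two_recolorable hsat hc.toIsRainbowK4Free hne hvw hvp hwq hpq
      (recolorable_singleton_of_notMem_k4Edges hc.noRainbow (hnotK4 v hNv p))
      (recolorable_singleton_of_notMem_k4Edges hc.noRainbow (hnotK4 w hNw q))
      (fun z _ _ => hmiss v hNv z) (fun z _ _ => hmiss w hNw z)
  rw [hNv] at hva hvb
  have := color_swap c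
  grind [hab.ne, G.adj_comm]

lemma card_le_three_of_isIndepSet (hsat : IsRainbowSat G (⊤ : SimpleGraph (Fin 4)))
    {S : Finset V} (hS : G.IsIndepSet S) (hdeg : ∀ v ∈ S, G.degree v = 3) : #S ≤ 3 := by
  by_cases hcard : #S ≤ 1
  · exact hcard.trans (by norm_num)
  obtain ⟨v, hv, w, hw, hvw⟩ := one_lt_card.1 (not_le.1 hcard)
  obtain ⟨c, hc, hc'⟩ := hsat.1
  have hc := IsRainbowK4Free.of_not_hasRainbowCopy hc hc'
  have hclique := isClique_neighborSet_of_degree_eq_three hsat (hdeg v hv) (hdeg w hw) hvw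
    (hS hv hw hvw)
  have hN : ∀ u ∈ S, G.neighborSet u = G.neighborSet v := fun u hu => by
    by_cases huv : u = v
    · rw [huv]
    · exact neighborSet_eq_of_degree_eq_three hsat (hdeg u hu) (hdeg v hv) huv (hS hu hv huv)
  obtain ⟨p, q, s, hpq, hps, hqs, hNv⟩ := card_eq_three.1 (hdeg v hv)
  have hadj : ∀ u ∈ S, ∀ z ∈ ({p, q, s} : Finset V), G.Adj u z := fun u hu z hz => by
    rwa [← mem_neighborSet, hN u hu, mem_neighborSet, ← mem_neighborFinset, hNv]
  have hp := hadj v hv p (by simp)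
  have hq := hadj v hv q (by simp)
  have hs := hadj v hv s (by simp)
  -- Every vertex of `S` repeats the colour of an edge of the triangle `pqs`, and by properness
  -- no two of them repeat the colour of the same edge.
  let oppositeColor : V → ℕ := fun z =>
    if z = p then c s(q, s) else if z = q then c s(p, s) else c s(p, q)
  refine (card_le_card_of_forall_subsingleton (t := {p, q, s})
    (fun u z => c s(u, z) = oppositeColor z) (fun u hu => ?_) fun z hz u hu u' hu' => ?_).trans
    card_le_three
  · have hmono := hc.noRainbow ⟨hadj u hu p (by simp), hadj u hu q (by simp),
      hadj u hu s (by simp), hclique hp hq hpq, hclique hp hs hps, hclique hq hs hqs⟩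
    simpa [HasMonoMatching, oppositeColor, hpq.symm, hps.symm, hqs.symm] using hmono
  · refine hc.proper (hadj u hu.1 z hz).symm (hadj u' hu'.1 z hz).symm ?_
    rw [color_swap c z u, color_swap c z u', hu.2, hu'.2]

end DegreeThree

/-- An edge of `G` regarded as the spine of a book, the triangles containing it being the pages,
together with the normal colouring used to analyse it. The orientation from `left` to `right`
serves to break symmetry. -/
structure Book (G : SimpleGraph V) (c : Sym2 V → ℕ) where
  left : V
  right : V
  adj : G.Adj left right
  normal : IsNormalColoring G c

namespace Book

variable [Fintype V] {c : Sym2 V → ℕ} {z r r' : V} {S : Finset V}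

/-- The book with the orientation of its spine reversed. -/
def flip (B : Book G c) : Book G c := ⟨B.right, B.left, B.adj.symm, B.normal⟩

/-- The pages of the book, represented by the common neighbours of the ends of its spine. -/
noncomputable def pages (B : Book G c) : Finset V :=
  {x | G.Adj B.left x ∧ G.Adj B.right x}

/-- The neighbours of `x` among the pages. -/
noncomputable def innerNbrs (B : Book G c) (x : V) : Finset V := {p ∈ B.pages | G.Adj x p}

/-- The neighbours of `x` outside the book. -/
noncomputable def outerNbrs (B : Book G c) (x : V) : Finset V :=
  {p | G.Adj x p ∧ p ∉ B.pages ∧ p ≠ B.left ∧ p ≠ B.right}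

/-- A page and its neighbours among the pages. -/
noncomputable def ball (B : Book G c) (x : V) : Finset V := insert x (B.innerNbrs x)

/-- The balls around the two pages are disjoint and no edge joins them. -/
def Far (B : Book G c) (y z : V) : Prop :=
  ∀ u ∈ B.ball y, ∀ w ∈ B.ball z, u ≠ w ∧ ¬ G.Adj u w

/-- An edge between two pages that has the colour of the spine. -/
structure SpineColored (B : Book G c) (x p : V) : Prop where
  mem_left : x ∈ B.pages
  mem_right : p ∈ B.pages
  adj : G.Adj x p
  color_eq : c s(x, p) = c s(B.left, B.right)

/-- An edge between two pages that does not have the colour of the spine, oriented so that its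
tail is joined to the left end and its head to the right end in the same colour. If both
orientations qualify, an arbitrary one is selected. -/
structure Arrow (B : Book G c) (x p : V) : Prop where
  mem_left : x ∈ B.pages
  mem_right : p ∈ B.pages
  adj : G.Adj x p
  color_ne : c s(x, p) ≠ c s(B.left, B.right)
  color_eq : c s(B.left, x) = c s(B.right, p)
  wellOrderingRel : c s(B.left, p) = c s(B.right, x) → WellOrderingRel x p

variable (B : Book G c)

@[simp] lemma mem_pages : x ∈ B.pages ↔ G.Adj B.left x ∧ G.Adj B.right x := by
  simp [pages]

@[simp] lemma mem_innerNbrs : p ∈ B.innerNbrs x ↔ p ∈ B.pages ∧ G.Adj x p := by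
  simp [innerNbrs]

@[simp] lemma mem_outerNbrs :
    p ∈ B.outerNbrs x ↔ G.Adj x p ∧ p ∉ B.pages ∧ p ≠ B.left ∧ p ≠ B.right := by
  simp [outerNbrs]

@[simp] lemma mem_ball : p ∈ B.ball x ↔ p = x ∨ p ∈ B.innerNbrs x := by
  simp [ball]

@[simp] lemma pages_flip : B.flip.pages = B.pages := by
  ext; simp [flip, and_comm]

@[simp] lemma innerNbrs_flip : B.flip.innerNbrs x = B.innerNbrs x := by
  simp [innerNbrs]

@[simp] lemma outerNbrs_flip : B.flip.outerNbrs x = B.outerNbrs x := by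
  ext; simp [flip, and_comm]

@[simp] lemma ball_flip : B.flip.ball x = B.ball x := by
  simp [ball]

lemma left_notMem_pages : B.left ∉ B.pages := by simp

lemma right_notMem_pages : B.right ∉ B.pages := by simp

variable {B}

lemma adj_cases (hyx : G.Adj y x) :
    x = B.left ∨ x = B.right ∨ x ∈ B.pages ∨ x ∈ B.outerNbrs y := by
  rw [mem_outerNbrs]; tauto

lemma Far.symm (h : B.Far y z) : B.Far z y := fun u hu w hw =>
  ⟨(h w hw u hu).1.symm, fun hadj => (h w hw u hu).2 hadj.symm⟩

lemma Far.flip (h : B.Far y z) : B.flip.Far y z := by simpa [Far] using h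

lemma Far.ne (h : B.Far y z) : y ≠ z := (h y (by simp) z (by simp)).1

lemma Far.not_adj (h : B.Far y z) : ¬ G.Adj y z := (h y (by simp) z (by simp)).2

lemma Far.notMem_pages (h : B.Far y z) (hyx : G.Adj y x) (hzx : G.Adj z x) : x ∉ B.pages :=
  fun hx => (h x (by simp [hyx, (B.mem_pages.1 hx)]) z (by simp)).2 hzx.symm

lemma left_adj (hx : x ∈ B.pages) : G.Adj B.left x := (B.mem_pages.1 hx).1

lemma right_adj (hx : x ∈ B.pages) : G.Adj B.right x := (B.mem_pages.1 hx).2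

lemma SpineColored.symm (h : B.SpineColored x p) : B.SpineColored p x :=
  ⟨h.mem_right, h.mem_left, h.adj.symm, by rw [Sym2.eq_swap]; exact h.color_eq⟩

lemma SpineColored.unique (h : B.SpineColored x p) (h' : B.SpineColored x q) : p = q :=
  B.normal.proper h.adj h'.adj (h.color_eq.trans h'.color_eq.symm)

lemma Arrow.unique_right (h : B.Arrow x p) (h' : B.Arrow x q) : p = q :=
  B.normal.proper (right_adj h.mem_right) (right_adj h'.mem_right)
    (h.color_eq.symm.trans h'.color_eq)

lemma Arrow.unique_left (h : B.Arrow p x) (h' : B.Arrow q x) : p = q :=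
  B.normal.proper (left_adj h.mem_left) (left_adj h'.mem_left)
    (h.color_eq.trans h'.color_eq.symm)

lemma Arrow.asymm (h : B.Arrow x p) : ¬ B.Arrow p x := fun h' =>
  _root_.asymm (h.wellOrderingRel h'.color_eq) (h'.wellOrderingRel h.color_eq)

lemma SpineColored.not_arrow (h : B.SpineColored x p) : ¬ B.Arrow x p := fun h' =>
  h'.color_ne h.color_eq

lemma spineColored_or_arrow (hx : x ∈ B.pages) (hp : p ∈ B.pages) (hxp : G.Adj x p) :
    B.SpineColored x p ∨ B.Arrow x p ∨ B.Arrow p x := by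
  by_cases hspine : c s(x, p) = c s(B.left, B.right)
  · exact .inl ⟨hx, hp, hxp, hspine⟩
  have hspine' : c s(p, x) ≠ c s(B.left, B.right) := by rwa [Sym2.eq_swap]
  have hmono := (B.normal.noRainbow ⟨B.adj, left_adj hx, left_adj hp, right_adj hx, right_adj hp,
    hxp⟩).resolve_left fun h => hspine h.symm
  rcases trichotomous_of WellOrderingRel x p with h | h | h
  · by_cases heq : c s(B.left, x) = c s(B.right, p)
    · exact .inr (.inl ⟨hx, hp, hxp, hspine, heq, fun _ => h⟩)
    · exact .inr (.inr ⟨hp, hx, hxp.symm, hspine', hmono.resolve_left heq, fun h => absurd h heq⟩)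
  · exact absurd h hxp.ne
  · by_cases heq : c s(B.left, p) = c s(B.right, x)
    · exact .inr (.inr ⟨hp, hx, hxp.symm, hspine', heq, fun _ => h⟩)
    · exact .inr (.inl ⟨hx, hp, hxp, hspine, hmono.resolve_right heq, fun h => absurd h heq⟩)

lemma card_innerNbrs_le_three (hx : x ∈ B.pages) : #(B.innerNbrs x) ≤ 3 := by
  have hsub : B.innerNbrs x ⊆ ({p | B.SpineColored x p} : Finset V) ∪
      (({p | B.Arrow x p} : Finset V) ∪ ({p | B.Arrow p x} : Finset V)) := by
    intro p hp
    rw [mem_innerNbrs] at hp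
    simpa using spineColored_or_arrow hx hp.1 hp.2
  have h₁ : #{p | B.SpineColored x p} ≤ 1 :=
    card_le_one.2 (by simpa using fun p hp q hq => hp.unique hq)
  have h₂ : #{p | B.Arrow x p} ≤ 1 :=
    card_le_one.2 (by simpa using fun p hp q hq => hp.unique_right hq)
  have h₃ : #{p | B.Arrow p x} ≤ 1 :=
    card_le_one.2 (by simpa using fun p hp q hq => hp.unique_left hq)
  have := card_le_card hsub
  have := card_union_le ({p | B.SpineColored x p} : Finset V)
    (({p | B.Arrow x p} : Finset V) ∪ ({p | B.Arrow p x} : Finset V))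
  have := card_union_le ({p | B.Arrow x p} : Finset V) ({p | B.Arrow p x} : Finset V)
  omega

lemma ball_subset_pages (hx : x ∈ B.pages) : B.ball x ⊆ B.pages := by
  intro p hp
  rw [mem_ball, mem_innerNbrs] at hp
  rcases hp with rfl | hp
  exacts [hx, hp.1]

lemma mem_ball_of_adj (hx : x ∈ B.pages) (hyx : G.Adj y x) : x ∈ B.ball y := by
  rw [mem_ball, mem_innerNbrs]
  exact .inr ⟨hx, hyx⟩

lemma card_ball_le_four (hx : x ∈ B.pages) : #(B.ball x) ≤ 4 :=
  (card_insert_le _ _).trans (by have := card_innerNbrs_le_three hx; omega)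

-- Pages that are not far apart are at distance at most three in a graph of maximum degree three.
lemma exists_far (hS : S ⊆ B.pages) (hcard : 64 < #S) (hy : y ∈ B.pages) :
    ∃ z ∈ S, B.Far y z := by
  by_contra! hcon
  have hsub : S ⊆ (B.ball y).biUnion fun u => (B.ball u).biUnion B.ball := by
    intro z hz
    have := hcon z hz
    simp only [Far] at this
    push Not at this
    obtain ⟨u, hu, w, hw, huw⟩ := this
    have hwp := ball_subset_pages (hS hz) hw
    simp only [mem_biUnion]
    refine ⟨u, hu, w, ?_, ?_⟩
    · by_cases h : u = w <;> simp_all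
    · have := hS hz
      simp only [mem_ball, mem_innerNbrs] at hw ⊢
      grind [G.adj_comm]
  have hcard' : #((B.ball y).biUnion fun u => (B.ball u).biUnion B.ball) ≤ 4 * (4 * 4) := by
    refine (card_biUnion_le_card_mul _ _ (4 * 4) fun u hu => ?_).trans
      (Nat.mul_le_mul_right _ (card_ball_le_four hy))
    have hup := ball_subset_pages hy hu
    exact (card_biUnion_le_card_mul _ _ 4 fun w hw =>
      card_ball_le_four (ball_subset_pages hup hw)).trans
      (Nat.mul_le_mul_right _ (card_ball_le_four hup))
  have := card_le_card hsub
  omega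

lemma misses_spineColor (hy : y ∈ B.pages) (hspine : ∀ x, ¬ B.SpineColored y x)
    (houter : ∀ x ∈ B.outerNbrs y, s(y, x) ∉ k4Edges G) :
    Misses G c y (c s(B.left, B.right)) := by
  have hly := B.mem_pages.1 hy
  intro x hyx heq
  rcases B.adj_cases hyx with rfl | rfl | hx | hx
  · exact hly.2.ne (B.normal.proper B.adj hly.1 (by rw [← heq, Sym2.eq_swap]))
  · exact hly.1.ne (B.normal.proper B.adj.symm hly.2 (by rw [color_swap c, ← heq, color_swap c]))
  · exact hspine x ⟨hy, hx, hyx, heq⟩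
  · rcases Sym2.eq_iff.1 (B.normal.eq_of_notMem_k4Edges (houter x hx) heq) with h | h
    exacts [hly.1.ne h.1.symm, hly.2.ne h.1.symm]

/-- The edge from the page `y` to the left end of the spine can be recoloured together with some
edges near `y`. This is how room is made for a missing edge between two distant pages. -/
def Linkable (B : Book G c) (y : V) : Prop :=
  ∃ F : Set (Sym2 V), s(y, B.left) ∈ F ∧ Recolorable G c F ∧ IsMatchingSet F ∧
    ∀ e ∈ F, (∃ v ∈ e, v ∈ B.ball y) ∧ ∀ v ∈ e, v = B.left ∨ v ∈ B.ball y

/-- The spine is the only edge in the common neighbourhood of `y` and `z`. -/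
def OnlySpine (B : Book G c) (y z : V) : Prop :=
  UniqueCommonEdge G y z B.left B.right

lemma Linkable.not_linkable_flip (hsat : IsRainbowSat G (⊤ : SimpleGraph (Fin 4)))
    (hy : y ∈ B.pages) (hz : z ∈ B.pages) (hfar : B.Far y z) (hspine : B.OnlySpine y z)
    (hlink : B.Linkable y) : ¬ B.flip.Linkable z := by
  rintro ⟨F', hzF', hF', hFm', hnear'⟩
  obtain ⟨F, hyF, hF, hFm, hnear⟩ := hlink
  simp only [ball_flip] at hnear'
  have hdisj : ∀ ⦃a e e'⦄, s(a, e) ∈ F → s(a, e') ∉ F' := by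
    intro a e e' ha ha'
    rcases (hnear _ ha).2 a (Sym2.mem_mk_left _ _) with h | h <;>
      rcases (hnear' _ ha').2 a (Sym2.mem_mk_left _ _) with h' | h'
    · exact B.adj.ne (h.symm.trans h')
    · exact B.left_notMem_pages (ball_subset_pages hz (h ▸ h'))
    · exact B.flip.left_notMem_pages (B.pages_flip ▸ ball_subset_pages hy (h' ▸ h))
    · exact (hfar a h a h').1 rfl
  have hFF' : Recolorable G c (F ∪ F') := hF.union hF' fun e he e' he' => by
    obtain ⟨v, hv, hvy⟩ := (hnear e he).1
    obtain ⟨w, hw, hwz⟩ := (hnear' e' he').1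
    exact ⟨v, hv, w, hw, hfar v hvy w hwz⟩
  have hFFm : IsMatchingSet (F ∪ F') := by
    rintro a e e' (h | h) (h' | h')
    exacts [hFm h h', absurd h' (hdisj h), absurd h (hdisj h'), hFm' h h']
  obtain ⟨γ, hγ⟩ := exists_fresh_color c
  obtain ⟨p, q, hyp, hyq, hzp, hzq, hpq, -, h₁, h₂⟩ :=
    exists_of_recolorable hsat B.normal.toIsRainbowK4Free hfar.ne hfar.not_adj hFF' hFFm
      (fun x _ _ => hγ s(y, x)) (fun x _ _ => hγ s(z, x))
  rcases Sym2.eq_iff.1 (hspine hyp hyq hzp hzq hpq) with ⟨rfl, rfl⟩ | ⟨rfl, rfl⟩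
  exacts [h₁ ⟨.inl hyF, .inr hzF'⟩, h₂ ⟨.inl hyF, .inr hzF'⟩]

/-- A page `y` attached to a single vertex `r` outside the book, by an edge in no `K₄`, that has no
edge in the colour of the spine and whose edge to the left end can be recoloured. -/
structure Pendant (B : Book G c) (y r : V) : Prop where
  mem_pages : y ∈ B.pages
  outerNbrs_eq : B.outerNbrs y = {r}
  notMem_k4Edges : s(y, r) ∉ k4Edges G
  misses : Misses G c y (c s(B.left, B.right))
  recolorable : Recolorable G c {s(y, B.left)}

lemma linkable_of_recolorable (h : Recolorable G c {s(y, B.left)}) :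
    B.Linkable y := by
  refine ⟨{s(y, B.left)}, rfl, h, isMatchingSet_singleton _ _, ?_⟩
  rintro _ rfl
  exact ⟨⟨y, by simp, by simp⟩, by simp⟩

lemma Pendant.linkable (h : B.Pendant y r) : B.Linkable y :=
  linkable_of_recolorable h.recolorable

lemma Pendant.outerNbrs_eq_of_flip (h : B.flip.Pendant y r) : B.outerNbrs y = {r} :=
  B.outerNbrs_flip ▸ h.outerNbrs_eq

lemma Far.adj_cases (hfar : B.Far y z) (hyx : G.Adj y x) (hzx : G.Adj z x) :
    x = B.left ∨ x = B.right ∨ x ∈ B.outerNbrs y ∧ x ∈ B.outerNbrs z := by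
  have := hfar.notMem_pages hyx hzx
  have := B.adj_cases hyx
  have := B.adj_cases hzx
  tauto

lemma Far.onlySpine (hfar : B.Far y z) (h : ∀ x ∈ B.outerNbrs y, x ∈ B.outerNbrs z →
    ∀ p, G.Adj y p → G.Adj z p → ¬ G.Adj x p) : B.OnlySpine y z := by
  intro p q hyp hyq hzp hzq hpq
  have := hfar.adj_cases hyp hzp
  have := hfar.adj_cases hyq hzq
  rw [Sym2.eq_iff]
  grind [hpq.ne, hpq.symm]

lemma Far.onlySpine_of_disjoint (hfar : B.Far y z)
    (h : Disjoint (B.outerNbrs y) (B.outerNbrs z)) : B.OnlySpine y z :=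
  hfar.onlySpine fun _ hy hz => absurd hz (Finset.disjoint_left.1 h hy)

lemma Pendant.false_of_adj_left (hsat : IsRainbowSat G (⊤ : SimpleGraph (Fin 4)))
    (hy : B.Pendant y r) (hz : B.flip.Pendant z r) (hfar : B.Far y z) (hr : G.Adj B.left r) :
    False := by
  have hmem : ∀ x, G.Adj y x → G.Adj z x → x = B.left ∨ x = B.right ∨ x = r := by
    simpa only [hy.outerNbrs_eq, hz.outerNbrs_eq_of_flip, mem_singleton, and_self]
      using fun x => hfar.adj_cases (x := x)
  have hry := B.mem_outerNbrs.1 (hy.outerNbrs_eq ▸ mem_singleton_self r)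
  have hrz := B.flip.mem_outerNbrs.1 (hz.outerNbrs_eq ▸ mem_singleton_self r)
  have hzγ : Misses G c z (c s(B.left, B.right)) := by
    rw [color_swap c]; exact hz.misses
  obtain ⟨p, q, hyp, hyq, hzp, hzq, hpq, hγ, h₁, h₂⟩ :=
    exists_of_two_recolorable hsat B.normal.toIsRainbowK4Free hfar.ne hfar.not_adj
      (B.mem_pages.1 hy.mem_pages).1.symm hrz.1 hr.ne hy.recolorable
      (recolorable_singleton_of_notMem_k4Edges B.normal.noRainbow hz.notMem_k4Edges)
      (fun x hx _ => hy.misses hx) (fun x hx _ => hzγ hx)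
  have hdr : ¬ G.Adj B.right r := fun h => hry.2.1 (B.mem_pages.2 ⟨hr, h⟩)
  have hp := hmem p hyp hzp
  have hq := hmem q hyq hzq
  have := color_swap c
  grind [G.adj_comm, hpq.ne]

lemma Pendant.not_pendant_flip (hsat : IsRainbowSat G (⊤ : SimpleGraph (Fin 4)))
    (hy : B.Pendant y r) (hfar : B.Far y z) : ¬ B.flip.Pendant z r' := by
  intro hz
  by_cases hadj : r = r' ∧ (G.Adj B.left r ∨ G.Adj B.right r)
  · obtain ⟨rfl, hr | hr⟩ := hadj
    · exact hy.false_of_adj_left hsat hz hfar hr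
    · exact hz.false_of_adj_left hsat hy hfar.symm.flip hr
  · refine hy.linkable.not_linkable_flip hsat hy.mem_pages
      (by simpa using hz.mem_pages) hfar (hfar.onlySpine fun x hxy hxz p hyp hzp hxp => ?_)
      hz.linkable
    have hp := hfar.adj_cases hyp hzp
    simp only [hy.outerNbrs_eq, hz.outerNbrs_eq_of_flip, mem_singleton] at hxy hxz hp
    grind [hxp.ne, hxp.symm]

/-- The pages for which too little can be charged to their edges. -/
noncomputable def weakPages (B : Book G c) : Finset V :=
  {y ∈ B.pages | B.outerNbrs y = ∅ ∧ B.Linkable y ∨ ∃ r, B.Pendant y r}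

lemma Far.notMem_weakPages_flip (hsat : IsRainbowSat G (⊤ : SimpleGraph (Fin 4)))
    (hfar : B.Far y z) (hy : y ∈ B.weakPages) : z ∉ B.flip.weakPages := by
  intro hz
  simp only [weakPages, mem_filter, pages_flip, outerNbrs_flip] at hy hz
  obtain ⟨hyp, hy | ⟨r, hy⟩⟩ := hy <;> obtain ⟨hzp, hz | ⟨r', hz⟩⟩ := hz
  · exact hy.2.not_linkable_flip hsat hyp hzp hfar
      (hfar.onlySpine_of_disjoint (by simp [hy.1])) hz.2
  · exact hy.2.not_linkable_flip hsat hyp hzp hfar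
      (hfar.onlySpine_of_disjoint (by simp [hy.1])) hz.linkable
  · exact hy.linkable.not_linkable_flip hsat hyp hzp hfar
      (hfar.onlySpine_of_disjoint (by simp [hz.1])) hz.2
  · exact hy.not_pendant_flip hsat hfar hz

lemma card_weakPages_le_or (hsat : IsRainbowSat G (⊤ : SimpleGraph (Fin 4))) :
    #B.weakPages ≤ 64 ∨ #B.flip.weakPages ≤ 64 := by
  by_contra! h
  obtain ⟨y, hy⟩ := card_pos.1 (by omega : 0 < #B.weakPages)
  have hsub : B.flip.weakPages ⊆ B.pages := by
    rw [← pages_flip]; exact filter_subset _ _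
  obtain ⟨z, hz, hfar⟩ := exists_far hsub h.2 (mem_filter.1 hy).1
  exact hfar.notMem_weakPages_flip hsat hy hz

/-- The inner pages incident to no edge in the colour of the spine. -/
noncomputable def spinelessPages (B : Book G c) : Finset V :=
  {y ∈ B.pages | B.outerNbrs y = ∅ ∧ ∀ x, ¬ B.SpineColored y x}

lemma card_spinelessPages_le (hsat : IsRainbowSat G (⊤ : SimpleGraph (Fin 4))) :
    #B.spinelessPages ≤ 64 := by
  by_contra! h
  obtain ⟨y, hy⟩ := card_pos.1 (by omega : 0 < #B.spinelessPages)
  obtain ⟨z, hz, hfar⟩ := exists_far (filter_subset _ _) h (mem_filter.1 hy).1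
  obtain ⟨hyp, hyo, hys⟩ := mem_filter.1 hy
  obtain ⟨hzp, hzo, hzs⟩ := mem_filter.1 hz
  obtain ⟨p, q, hyp, hyq, hzp, hzq, hpq, hγ, -⟩ :=
    exists_rainbow_K4 hsat B.normal.toIsRainbowK4Free hfar.ne hfar.not_adj
      (misses_spineColor hyp hys (by simp [hyo])) (misses_spineColor hzp hzs (by simp [hzo]))
  exact hγ (congrArg c (hfar.onlySpine_of_disjoint (by simp [hyo]) hyp hyq hzp hzq hpq))


variable {x₀ x₁ y' : V}

lemma arrow_of_path (hx₀y : B.SpineColored y x₀) (hx₁y : B.Arrow x₁ y) (hadj : G.Adj x₀ x₁) :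
    B.Arrow x₀ x₁ := by
  rcases spineColored_or_arrow hx₀y.mem_right hx₁y.mem_left hadj with h | h | h
  · exact absurd (h.unique hx₀y.symm) hx₁y.adj.ne
  · exact h
  · exact absurd (h.unique_right hx₁y) hx₀y.adj.ne'

lemma Arrow.mono_right (h : B.Arrow x y) : c s(y, B.right) = c s(B.left, x) := by
  rw [Sym2.eq_swap]; exact h.color_eq.symm

/-- An inner page that is not the tail of an arrow, and that cannot be linked. -/
structure Stuck (B : Book G c) (y : V) : Prop where
  mem_pages : y ∈ B.pages
  outerNbrs_eq : B.outerNbrs y = ∅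
  not_arrow : ∀ x, ¬ B.Arrow y x
  not_linkable : ¬ B.Linkable y

lemma adj_cases_of_outerNbrs_eq_empty (hy : y ∈ B.pages) (hyo : B.outerNbrs y = ∅)
    (hyx : G.Adj y x) :
    x = B.left ∨ x = B.right ∨ B.SpineColored y x ∨ B.Arrow y x ∨ B.Arrow x y := by
  rcases B.adj_cases hyx with h | h | h | h
  · exact .inl h
  · exact .inr (.inl h)
  · exact .inr (.inr (spineColored_or_arrow hy h hyx))
  · simp [hyo] at h

lemma Stuck.adj_cases (hy : B.Stuck y) (hyx : G.Adj y x) :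
    x = B.left ∨ x = B.right ∨ B.SpineColored y x ∨ B.Arrow x y := by
  have := adj_cases_of_outerNbrs_eq_empty hy.mem_pages hy.outerNbrs_eq hyx
  have := hy.not_arrow x
  tauto

lemma Stuck.mono_or (hy : B.Stuck y) (hK : IsK4 G y B.left p q) :
    (c s(y, p) = c s(B.left, q) ∨ c s(y, q) = c s(B.left, p)) ∨
      B.SpineColored y p ∧ B.Arrow q y ∨ B.SpineColored y q ∧ B.Arrow p y := by
  obtain ⟨-, hyp, hyq, hlp, hlq, hpq⟩ := hK
  rcases (hy.adj_cases hyp).resolve_left hlp.ne' with rfl | hp | hp <;>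
    rcases (hy.adj_cases hyq).resolve_left hlq.ne' with rfl | hq | hq
  · exact absurd rfl hpq.ne
  · exact .inl (.inr hq.color_eq)
  · exact .inl (.inl hq.mono_right)
  · exact .inl (.inl hp.color_eq)
  · exact absurd (hp.unique hq) hpq.ne
  · exact .inr (.inl ⟨hp, hq⟩)
  · exact .inl (.inr hp.mono_right)
  · exact .inr (.inr ⟨hq, hp⟩)
  · exact absurd (hp.unique_left hq) hpq.ne

lemma Stuck.exists_arrow (hy : B.Stuck y) (hx₀ : B.SpineColored y x₀) :
    ∃ x₁, B.Arrow x₀ x₁ ∧ B.Arrow x₁ y ∧ c s(y, B.left) = c s(x₀, x₁) := by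
  by_contra! hcon
  refine hy.not_linkable (linkable_of_recolorable
    (recolorable_singleton B.normal.noRainbow fun p q hK => ?_))
  by_contra hno
  have hmono := B.normal.noRainbow hK
  rcases (hy.mono_or hK).resolve_left hno with ⟨hp, hq⟩ | ⟨hq, hp⟩
  · obtain rfl := hp.unique hx₀
    exact hno (hmono.resolve_left (hcon q (arrow_of_path hx₀ hq hK.2.2.2.2.2) hq))
  · obtain rfl := hq.unique hx₀
    refine hno (hmono.resolve_left ?_)
    rw [color_swap c p q]
    exact hcon p (arrow_of_path hx₀ hp hK.2.2.2.2.2.symm) hp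

lemma Stuck.mono_or_eq (hy : B.Stuck y) (hx₀ : B.SpineColored y x₀) (hx₁ : B.Arrow x₁ y)
    (hK : IsK4 G y B.left p q) :
    (c s(y, p) = c s(B.left, q) ∨ c s(y, q) = c s(B.left, p)) ∨ s(p, q) = s(x₀, x₁) := by
  refine (hy.mono_or hK).imp_right ?_
  rintro (⟨hp, hq⟩ | ⟨hq, hp⟩)
  · rw [hp.unique hx₀, hq.unique_left hx₁]
  · rw [hq.unique hx₀, hp.unique_left hx₁, Sym2.eq_swap]

lemma exists_arrow_of_color_eq (hx₀o : B.outerNbrs x₀ = ∅) (hx₀ : B.SpineColored x₀ y)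
    (hx₀₁ : B.Arrow x₀ x₁) (hK : IsK4 G x₀ x₁ p q) (hpq : c s(p, q) = c s(y, B.left))
    (hne : s(p, q) ≠ s(y, B.left)) : ∃ t, B.Arrow t x₀ ∧ s(p, q) = s(B.right, t) := by
  have hly := left_adj hx₀.mem_right
  have hcases : ∀ u w, G.Adj x₀ u → G.Adj x₁ u → G.Adj u w → c s(u, w) = c s(y, B.left) →
      s(u, w) ≠ s(y, B.left) → u = B.right ∨ B.Arrow u x₀ := by
    intro u w h₀ h₁ huw hcol hne
    rcases adj_cases_of_outerNbrs_eq_empty hx₀.mem_left hx₀o h₀ with rfl | rfl | h | h | h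
    · rw [B.normal.proper huw hly (by rw [hcol, Sym2.eq_swap]), Sym2.eq_swap] at hne
      exact absurd rfl hne
    · exact .inl rfl
    · obtain rfl := h.unique hx₀
      rw [B.normal.proper huw hly.symm hcol] at hne
      exact absurd rfl hne
    · exact absurd (hx₀₁.unique_right h) h₁.ne
    · exact .inr h
  obtain ⟨-, h₀p, h₀q, h₁p, h₁q, hadj⟩ := hK
  have hp := hcases p q h₀p h₁p hadj hpq hne
  have hq := hcases q p h₀q h₁q hadj.symm (by rw [Sym2.eq_swap, hpq]) (by rwa [Sym2.eq_swap])
  rcases hp with rfl | hp <;> rcases hq with rfl | hq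
  · exact absurd rfl hadj.ne
  · exact ⟨q, hq, rfl⟩
  · exact ⟨p, hp, Sym2.eq_swap⟩
  · exact absurd (hp.unique_left hq) hadj.ne

/-- The pages `x₀`, `x₁`, `p` near a stuck page `y` with a neighbour along an edge in the colour
of the spine, when neither `y` nor `x₀` has neighbours outside the book. -/
structure StuckConfig (B : Book G c) (y x₀ x₁ p : V) : Prop where
  stuck : B.Stuck y
  spine₀ : B.SpineColored y x₀
  arrow₀₁ : B.Arrow x₀ x₁
  arrow₁ : B.Arrow x₁ y
  color_left : c s(y, B.left) = c s(x₀, x₁)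
  arrow_top : B.Arrow p x₀
  spine_top : B.SpineColored p x₁
  color_right : c s(B.right, p) = c s(x₀, x₁)

lemma Stuck.exists_stuckConfig (hy : B.Stuck y) (hx₀ : B.SpineColored y x₀)
    (hx₀₁ : B.Arrow x₀ x₁) (hx₁ : B.Arrow x₁ y) (hc : c s(y, B.left) = c s(x₀, x₁))
    (hx₀o : B.outerNbrs x₀ = ∅) :
    ∃ p, B.StuckConfig y x₀ x₁ p := by
  by_contra! hcon
  have hF : IsMatchingSet ({s(y, B.left), s(x₀, x₁)} : Set (Sym2 V)) := by
    have := hx₀.adj.ne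
    have := hx₁.adj.ne'
    have := (left_adj hx₀.mem_right).ne
    have := (left_adj hx₁.mem_left).ne
    intro a b d hab had
    simp only [Set.mem_insert_iff, Set.mem_singleton_iff, Sym2.eq_iff] at hab had
    grind
  refine hy.not_linkable ⟨_, .inl rfl, hF.recolorable B.normal.noRainbow ?_, hF, ?_⟩
  · rintro _ (rfl | rfl) <;> refine ⟨_, _, rfl, fun p q hK => ?_⟩
    · refine (hy.mono_or_eq hx₀ hx₁ hK).symm.imp_left fun h => ?_
      rw [h]
      exact ⟨hc, .inr rfl⟩
    · refine (B.normal.noRainbow hK).imp_left fun hpq => ⟨hpq, ?_⟩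
      by_contra hpqF
      obtain ⟨t, ht, heq⟩ := exists_arrow_of_color_eq hx₀o hx₀.symm hx₀₁ hK
        (by rw [← hpq, hc]) (fun h => hpqF (.inl h))
      have hx₁t : G.Adj t x₁ := by
        rcases Sym2.eq_iff.1 heq with ⟨-, rfl⟩ | ⟨rfl, -⟩
        exacts [hK.2.2.2.2.1.symm, hK.2.2.2.1.symm]
      refine hcon t ⟨hy, hx₀, hx₀₁, hx₁, hc, ht,
        (spineColored_or_arrow ht.mem_left hx₁.mem_left hx₁t).resolve_right ?_, by rw [hpq, heq]⟩
      rintro (h | h)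
      · exact hx₀₁.adj.ne (ht.unique_right h)
      · exact hy.not_arrow _ (h.unique_right hx₁ ▸ ht)
  · have h₀ : x₀ ∈ B.ball y := mem_ball_of_adj hx₀.mem_right hx₀.adj
    have h₁ : x₁ ∈ B.ball y := mem_ball_of_adj hx₁.mem_left hx₁.adj.symm
    rintro _ (rfl | rfl)
    · exact ⟨⟨y, by simp, by simp⟩, by simp⟩
    · refine ⟨⟨x₀, by simp, h₀⟩, fun v hv => .inr ?_⟩
      rcases Sym2.mem_iff.1 hv with rfl | rfl <;> assumption

namespace StuckConfig

lemma not_adj (h : B.StuckConfig y x₀ x₁ p) : ¬ G.Adj y p := by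
  intro hadj
  rcases spineColored_or_arrow h.stuck.mem_pages h.arrow_top.mem_left hadj with h' | h' | h'
  · exact h.arrow_top.adj.ne (h'.unique h.spine₀)
  · exact h.stuck.not_arrow _ h'
  · exact h.spine_top.adj.ne (h'.unique_left h.arrow₁)

lemma ne (h : B.StuckConfig y x₀ x₁ p) : y ≠ p := by
  rintro rfl
  exact h.stuck.not_arrow _ h.arrow_top

lemma misses (h : B.StuckConfig y x₀ x₁ p) : Misses G c y (c s(B.left, x₀)) := by
  have hproper := B.normal.proper
  have hswap := color_swap c
  have hl₀ := left_adj h.spine₀.mem_right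
  have hl₁ := left_adj h.arrow₁.mem_left
  have hly := left_adj h.stuck.mem_pages
  intro x hyx heq
  rcases h.stuck.adj_cases hyx with rfl | rfl | h' | h'
  · exact h.spine₀.adj.ne (hproper hly hl₀ (by rw [hswap, heq]))
  · exact h.arrow₀₁.adj.ne (hproper hl₀ hl₁ (by rw [← heq, h.arrow₁.mono_right]))
  · obtain rfl := h'.unique h.spine₀
    exact hly.ne (hproper hl₀.symm h'.adj.symm (by rw [hswap, ← heq, hswap]))
  · obtain rfl := h'.unique_left h.arrow₁
    exact (right_adj h'.mem_right).ne (hproper (right_adj h'.mem_left).symm h'.adj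
      (by rw [hswap, ← h.arrow₀₁.color_eq, ← heq, hswap]))

lemma misses_top (h : B.StuckConfig y x₀ x₁ p) (hpo : B.outerNbrs p = ∅) :
    Misses G c p (c s(B.left, x₀)) := by
  have hproper := B.normal.proper
  have hswap := color_swap c
  have hl₀ := left_adj h.spine₀.mem_right
  have hr₁ := right_adj h.arrow₁.mem_left
  have hlp := left_adj h.arrow_top.mem_left
  have hrp := right_adj h.arrow_top.mem_left
  intro x hpx heq
  rcases adj_cases_of_outerNbrs_eq_empty h.arrow_top.mem_left hpo hpx with
    rfl | rfl | h' | h' | h'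
  · exact h.arrow_top.adj.ne (hproper hlp hl₀ (by rw [hswap, heq]))
  · exact h.spine_top.adj.ne (hproper hrp hr₁ (by rw [hswap, heq, h.arrow₀₁.color_eq]))
  · obtain rfl := h'.unique h.spine_top
    exact hrp.ne (hproper hr₁.symm h'.adj.symm
      (by rw [hswap, ← h.arrow₀₁.color_eq, ← heq, hswap]))
  · obtain rfl := h'.unique_right h.arrow_top
    exact hlp.ne (hproper hl₀.symm h'.adj.symm (by rw [hswap, ← heq, hswap]))
  · obtain rfl := hproper (left_adj h'.mem_left) (left_adj h.stuck.mem_pages)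
      (by rw [h'.color_eq, h.color_right, ← h.color_left, hswap])
    exact h.not_adj h'.adj

lemma color_right₀ (h : B.StuckConfig y x₀ x₁ p) : c s(B.right, x₀) = c s(y, x₁) := by
  have hproper := B.normal.proper
  have hK : IsK4 G x₀ x₁ B.right y := ⟨h.arrow₀₁.adj, (right_adj h.spine₀.mem_right).symm,
    h.spine₀.adj.symm, (right_adj h.arrow₁.mem_left).symm, h.arrow₁.adj,
    right_adj h.stuck.mem_pages⟩
  rcases B.normal.noRainbow hK with h' | h' | h'
  · refine absurd (hproper (left_adj h.stuck.mem_pages).symm (right_adj h.stuck.mem_pages).symm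
      ?_) B.adj.ne
    rw [h.color_left, h', color_swap c]
  · rw [color_swap c, h', color_swap c]
  · refine absurd (hproper B.adj.symm (right_adj h.arrow₁.mem_left) ?_)
      (left_adj h.arrow₁.mem_left).ne
    rw [color_swap c B.right x₁, ← h', h.spine₀.symm.color_eq, color_swap c]

lemma color_left₁ (h : B.StuckConfig y x₀ x₁ p) : c s(B.left, x₁) = c s(p, x₀) := by
  have hproper := B.normal.proper
  have hlp := left_adj h.arrow_top.mem_left
  have hl₀ := left_adj h.spine₀.mem_right
  have hK : IsK4 G B.left p x₀ x₁ := ⟨hlp, hl₀, left_adj h.arrow₁.mem_left, h.arrow_top.adj,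
    h.spine_top.adj, h.arrow₀₁.adj⟩
  rcases B.normal.noRainbow hK with h' | h' | h'
  · refine absurd (hproper hlp.symm (right_adj h.arrow_top.mem_left).symm ?_) B.adj.ne
    rw [color_swap c, h', ← h.color_right, color_swap c]
  · refine absurd (hproper B.adj hl₀ ?_) (right_adj h.spine₀.mem_right).ne
    rw [h', h.spine_top.color_eq]
  · exact h'

lemma outerNbrs_ne_empty (hsat : IsRainbowSat G (⊤ : SimpleGraph (Fin 4)))
    (h : B.StuckConfig y x₀ x₁ p) : B.outerNbrs p ≠ ∅ := by
  intro hpo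
  have hswap := color_swap c
  obtain ⟨a, b, hya, hyb, hpa, hpb, hab, hγ, h₁, h₂⟩ := exists_rainbow_K4 hsat
    B.normal.toIsRainbowK4Free h.ne h.not_adj h.misses (h.misses_top hpo)
  have hcases : ∀ x, G.Adj y x → x = B.left ∨ x = B.right ∨ x = x₀ ∨ x = x₁ := by
    intro x hyx
    have := h.stuck.adj_cases hyx
    exact this.imp_right (.imp_right (.imp (·.unique h.spine₀) (·.unique_left h.arrow₁)))
  have hlr : c s(y, B.left) = c s(p, B.right) := by
    rw [h.color_left, ← h.color_right, hswap]
  have hl₁ : c s(y, x₁) = c s(p, B.left) := by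
    rw [← h.color_right₀, ← h.arrow_top.color_eq, hswap]
  have hr₀ : c s(y, B.right) = c s(p, x₀) := h.arrow₁.mono_right.trans h.color_left₁
  have h₀₁ : c s(y, x₀) = c s(p, x₁) := h.spine₀.color_eq.trans h.spine_top.color_eq.symm
  have hr₁ := h.arrow₀₁.color_eq
  have hl₀' := hswap B.left x₀
  have hr₁' := hswap B.right x₁
  rcases hcases a hya with rfl | rfl | rfl | rfl <;>
    rcases hcases b hyb with rfl | rfl | rfl | rfl <;>
    grind [hab.ne]

end StuckConfig


/-- The page `w` compensates for the missing weight of the page `y` in the discharging argument: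
either `w` is the neighbour of `y` along an edge in the colour of the spine, or it is the fourth
page of a configuration as in `StuckConfig`. -/
def Donates (B : Book G c) (w y : V) : Prop :=
  (B.SpineColored w y ∧ ∃ x, B.Arrow w x ∧ B.Arrow x y) ∨
    ∃ x₀ x₁, B.Arrow w x₀ ∧ B.Arrow x₀ x₁ ∧ B.Arrow x₁ y ∧ B.SpineColored w x₁

lemma Donates.exists_spineColored (h : B.Donates w y) : ∃ x, B.SpineColored w x := by
  rcases h with ⟨h, -⟩ | ⟨_, _, -, -, -, h⟩ <;> exact ⟨_, h⟩

lemma Donates.exists_arrow_arrow (h : B.Donates w y) : ∃ x z, B.Arrow w x ∧ B.Arrow x z := by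
  rcases h with ⟨-, _, h₁, h₂⟩ | ⟨_, _, h₁, h₂, -⟩ <;> exact ⟨_, _, h₁, h₂⟩

lemma Donates.eq_of_stuck (h : B.Donates w y) (h' : B.Donates w y') (hy : B.Stuck y)
    (hy' : B.Stuck y') : y = y' := by
  rcases h with ⟨h, -⟩ | ⟨_, x₁, -, -, hx₁, h⟩ <;> rcases h' with ⟨h', -⟩ | ⟨_, x₁', -, -, hx₁', h'⟩
  · exact h.unique h'
  · obtain rfl := h.unique h'
    exact absurd hx₁' (hy.not_arrow _)
  · obtain rfl := h.unique h'
    exact absurd hx₁ (hy'.not_arrow _)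
  · obtain rfl := h.unique h'
    exact hx₁.unique_right hx₁'

lemma Stuck.exists_donates (hsat : IsRainbowSat G (⊤ : SimpleGraph (Fin 4))) (hy : B.Stuck y)
    (hx₀ : B.SpineColored y x₀) : ∃ w, B.outerNbrs w ≠ ∅ ∧ B.Donates w y := by
  obtain ⟨x₁, hx₀₁, hx₁, hc⟩ := hy.exists_arrow hx₀
  by_cases hx₀o : B.outerNbrs x₀ = ∅
  · obtain ⟨p, hp⟩ := hy.exists_stuckConfig hx₀ hx₀₁ hx₁ hc hx₀o
    exact ⟨p, hp.outerNbrs_ne_empty hsat, .inr ⟨x₀, x₁, hp.arrow_top, hx₀₁, hx₁, hp.spine_top⟩⟩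
  · exact ⟨x₀, hx₀o, .inl ⟨hx₀.symm, x₁, hx₀₁, hx₁⟩⟩

lemma notMem_k4Edges_of_outerNbrs_eq (hr : B.outerNbrs y = {r})
    (hpage : ∀ x ∈ B.pages, G.Adj y x → B.outerNbrs x = ∅) : s(y, r) ∉ k4Edges G := by
  have hr' := B.mem_outerNbrs.1 (hr ▸ mem_singleton_self r)
  rintro ⟨a, b, s, t, hK, heq⟩
  have hK' : IsK4 G y r s t := by
    rcases Sym2.eq_iff.1 heq with ⟨rfl, rfl⟩ | ⟨rfl, rfl⟩
    exacts [hK, hK.swap_left]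
  obtain ⟨-, hys, hyt, hrs, hrt, hst⟩ := hK'
  have hend : ∀ x, G.Adj y x → G.Adj r x → x = B.left ∨ x = B.right := by
    intro x hyx hrx
    rcases B.adj_cases hyx with h | h | h | h
    · exact .inl h
    · exact .inr h
    · have : r ∈ B.outerNbrs x := B.mem_outerNbrs.2 ⟨hrx.symm, hr'.2⟩
      simp [hpage x h hyx] at this
    · exact absurd (mem_singleton.1 (hr ▸ h)) hrx.ne'
  refine hr'.2.1 (B.mem_pages.2 ?_)
  rcases hend s hys hrs with rfl | rfl <;> rcases hend t hyt hrt with rfl | rfl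
  exacts [absurd rfl hst.ne, ⟨hrs.symm, hrt.symm⟩, ⟨hrt.symm, hrs.symm⟩, absurd rfl hst.ne]

lemma pendant_of_outerNbrs_eq (hy : y ∈ B.pages) (hspine : ∀ x, ¬ B.SpineColored y x)
    (harrow : ∀ x, ¬ B.Arrow y x) (hr : B.outerNbrs y = {r})
    (hin : ∀ x, B.Arrow x y → B.outerNbrs x = ∅) : B.Pendant y r := by
  have htail : ∀ x ∈ B.pages, G.Adj y x → B.Arrow x y := by
    intro x hx hyx
    have := spineColored_or_arrow hy hx hyx
    have := hspine x
    have := harrow x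
    tauto
  have hnot : s(y, r) ∉ k4Edges G :=
    notMem_k4Edges_of_outerNbrs_eq hr fun x hx hyx => hin x (htail x hx hyx)
  refine ⟨hy, hr, hnot, misses_spineColor hy hspine (by simpa [hr]),
    recolorable_singleton B.normal.noRainbow fun p q hK => ?_⟩
  have hcases : ∀ x, G.Adj y x → G.Adj B.left x → s(y, x) ∈ k4Edges G →
      x = B.right ∨ B.Arrow x y := by
    intro x hyx hlx hx
    rcases B.adj_cases hyx with rfl | h | h | h
    · exact absurd rfl hlx.ne
    · exact .inl h
    · exact .inr (htail x h hyx)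
    · rw [hr, mem_singleton] at h
      exact absurd (h ▸ hx) hnot
  have hp := hcases p hK.2.1 hK.2.2.2.1 (hK.mem_k4Edges (by simp) (by simp) hK.2.1.ne)
  have hq := hcases q hK.2.2.1 hK.2.2.2.2.1 (hK.mem_k4Edges (by simp) (by simp) hK.2.2.1.ne)
  rcases hp with rfl | hp <;> rcases hq with rfl | hq
  · exact absurd rfl hK.2.2.2.2.2.ne
  · exact .inl hq.mono_right
  · exact .inr hp.mono_right
  · exact absurd (hp.unique_left hq) hK.2.2.2.2.2.ne

/-- The weight of a page in the discharging argument. Every edge between two pages contributes `2`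
in total, and every edge leaving the book contributes `2` to its end in the book. -/
noncomputable def weight (B : Book G c) (x : V) : ℕ :=
  #{p | B.SpineColored x p} + 2 * #{p | B.Arrow x p} + 2 * #(B.outerNbrs x)

/-- The pages to which weight is moved along the relation `Donates`. -/
noncomputable def stuckPages (B : Book G c) : Finset V :=
  {y ∈ B.pages | B.Stuck y ∧ ∃ x, B.SpineColored y x}

/-- The pages that give away weight along the relation `Donates`. -/
noncomputable def donorPages (B : Book G c) : Finset V :=
  {w ∈ B.pages | B.outerNbrs w ≠ ∅ ∧ ∃ y ∈ B.stuckPages, B.Donates w y}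

/-- The pages to which weight is moved along an arrow. -/
noncomputable def sinkPages (B : Book G c) : Finset V :=
  {y ∈ B.pages | (∀ x, ¬ B.SpineColored y x) ∧ (∀ x, ¬ B.Arrow y x) ∧
    ∃ x, B.Arrow x y ∧ B.outerNbrs x ≠ ∅}

/-- The pages that give away weight along an arrow. -/
noncomputable def sourcePages (B : Book G c) : Finset V :=
  {x ∈ B.pages | B.outerNbrs x ≠ ∅ ∧ ∃ y ∈ B.sinkPages, B.Arrow x y}

lemma card_stuckPages_le (hsat : IsRainbowSat G (⊤ : SimpleGraph (Fin 4))) :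
    #B.stuckPages ≤ #B.donorPages := by
  refine card_le_card_of_forall_subsingleton (fun y w => B.Donates w y) ?_ ?_
  · intro y hy
    obtain ⟨-, hstuck, x₀, hx₀⟩ := mem_filter.1 hy
    obtain ⟨w, hw, hwy⟩ := hstuck.exists_donates hsat hx₀
    obtain ⟨x, hx⟩ := hwy.exists_spineColored
    exact ⟨w, mem_filter.2 ⟨hx.mem_left, hw, y, hy, hwy⟩, hwy⟩
  · rintro w - y ⟨hy, hwy⟩ y' ⟨hy', hwy'⟩
    exact hwy.eq_of_stuck hwy' (mem_filter.1 hy).2.1 (mem_filter.1 hy').2.1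

lemma card_sinkPages_le : #B.sinkPages ≤ #B.sourcePages := by
  refine card_le_card_of_forall_subsingleton (fun y x => B.Arrow x y) ?_ ?_
  · intro y hy
    obtain ⟨-, -, -, x, hxy, hx⟩ := mem_filter.1 hy
    exact ⟨x, mem_filter.2 ⟨hxy.mem_left, hx, y, hy, hxy⟩, hxy⟩
  · rintro x - y ⟨-, hxy⟩ y' ⟨-, hxy'⟩
    exact hxy.unique_right hxy'

lemma disjoint_donorPages_sourcePages : Disjoint B.donorPages B.sourcePages := by
  refine Finset.disjoint_left.2 fun w hw hw' => ?_
  obtain ⟨-, -, y, -, hwy⟩ := mem_filter.1 hw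
  obtain ⟨-, -, z, hz, hwz⟩ := mem_filter.1 hw'
  obtain ⟨x, u, hwx, hxu⟩ := hwy.exists_arrow_arrow
  obtain ⟨-, -, hz, -⟩ := mem_filter.1 hz
  exact hz u (hwx.unique_right hwz ▸ hxu)

lemma one_le_card_spineColored (h : B.SpineColored x p) : 1 ≤ #{p | B.SpineColored x p} :=
  card_pos.2 ⟨p, by simpa⟩

lemma one_le_card_arrow (h : B.Arrow x p) : 1 ≤ #{p | B.Arrow x p} :=
  card_pos.2 ⟨p, by simpa⟩

lemma three_le_weight_of_outerNbrs_eq_empty (hx : x ∈ B.pages) (hxo : B.outerNbrs x = ∅) :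
    3 ≤ B.weight x + (if x ∈ B.stuckPages then 2 else 0) +
      (if x ∈ B.spinelessPages then 3 else 0) + (if x ∈ B.weakPages then 2 else 0) := by
  by_cases hspine : ∃ p, B.SpineColored x p
  swap
  · have hspineless : x ∈ B.spinelessPages := mem_filter.2 ⟨hx, hxo, not_exists.1 hspine⟩
    rw [if_pos hspineless]
    omega
  obtain ⟨p, hp⟩ := hspine
  have h₁ : 1 ≤ B.weight x := (one_le_card_spineColored hp).trans (by unfold weight; omega)
  by_cases harrow : ∃ z, B.Arrow x z
  · obtain ⟨z, hz⟩ := harrow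
    have h₂ := one_le_card_arrow hz
    have h₃ := one_le_card_spineColored hp
    unfold weight
    omega
  by_cases hlink : B.Linkable x
  · have hweak : x ∈ B.weakPages := mem_filter.2 ⟨hx, .inl ⟨hxo, hlink⟩⟩
    rw [if_pos hweak]
    omega
  · have hstuck : x ∈ B.stuckPages :=
      mem_filter.2 ⟨hx, ⟨hx, hxo, not_exists.1 harrow, hlink⟩, p, hp⟩
    rw [if_pos hstuck]
    omega

lemma three_le_weight_of_arrow (hxo : B.outerNbrs x ≠ ∅) (hxz : B.Arrow x z) :
    3 + (if x ∈ B.donorPages then 2 else 0) + (if x ∈ B.sourcePages then 1 else 0)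
      ≤ B.weight x := by
  have h₁ := one_le_card_arrow hxz
  have h₂ := card_pos.2 (nonempty_iff_ne_empty.2 hxo)
  by_cases hd : x ∈ B.donorPages
  · obtain ⟨-, -, y, -, hxy⟩ := mem_filter.1 hd
    obtain ⟨p, hp⟩ := hxy.exists_spineColored
    have h₃ := one_le_card_spineColored hp
    rw [if_pos hd, if_neg (Finset.disjoint_left.1 disjoint_donorPages_sourcePages hd)]
    unfold weight
    omega
  · rw [if_neg hd]
    unfold weight
    split_ifs <;> omega

lemma three_le_weight_of_not_arrow (hx : x ∈ B.pages) (hxo : B.outerNbrs x ≠ ∅)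
    (harrow : ∀ z, ¬ B.Arrow x z) :
    3 ≤ B.weight x + (if x ∈ B.sinkPages then 1 else 0) +
      (if x ∈ B.weakPages then 2 else 0) := by
  have h₁ := card_pos.2 (nonempty_iff_ne_empty.2 hxo)
  by_cases hspine : ∃ p, B.SpineColored x p
  · obtain ⟨p, hp⟩ := hspine
    have h₂ := one_le_card_spineColored hp
    unfold weight
    omega
  by_cases hcard : #(B.outerNbrs x) = 1
  · obtain ⟨r, hr⟩ := card_eq_one.1 hcard
    by_cases hin : ∃ z, B.Arrow z x ∧ B.outerNbrs z ≠ ∅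
    · have hsink : x ∈ B.sinkPages := mem_filter.2 ⟨hx, not_exists.1 hspine, harrow, hin⟩
      rw [if_pos hsink]
      unfold weight
      omega
    · push Not at hin
      have hweak : x ∈ B.weakPages := mem_filter.2
        ⟨hx, .inr ⟨r, pendant_of_outerNbrs_eq hx (not_exists.1 hspine) harrow hr hin⟩⟩
      rw [if_pos hweak]
      unfold weight
      omega
  · unfold weight
    omega

lemma three_add_le_weight_add (hx : x ∈ B.pages) :
    3 + (if x ∈ B.donorPages then 2 else 0) + (if x ∈ B.sourcePages then 1 else 0) ≤
      B.weight x + (if x ∈ B.stuckPages then 2 else 0) + (if x ∈ B.sinkPages then 1 else 0) +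
        (if x ∈ B.spinelessPages then 3 else 0) + (if x ∈ B.weakPages then 2 else 0) := by
  by_cases hxo : B.outerNbrs x = ∅
  · have := three_le_weight_of_outerNbrs_eq_empty hx hxo
    rw [if_neg (fun h => (mem_filter.1 h).2.1 hxo), if_neg (fun h => (mem_filter.1 h).2.1 hxo)]
    omega
  by_cases harrow : ∃ z, B.Arrow x z
  · obtain ⟨z, hz⟩ := harrow
    have := three_le_weight_of_arrow hxo hz
    omega
  · have := three_le_weight_of_not_arrow hx hxo (not_exists.1 harrow)
    have hd : x ∉ B.donorPages := fun h =>
      have ⟨_, _, _, _, hxy⟩ := mem_filter.1 h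
      have ⟨z, _, hxz, _⟩ := hxy.exists_arrow_arrow
      harrow ⟨z, hxz⟩
    have hs : x ∉ B.sourcePages := fun h =>
      have ⟨_, _, y, _, hxy⟩ := mem_filter.1 h
      harrow ⟨y, hxy⟩
    rw [if_neg hd, if_neg hs]
    omega

lemma three_mul_card_pages_le (hsat : IsRainbowSat G (⊤ : SimpleGraph (Fin 4)))
    (hweak : #B.weakPages ≤ 64) : 3 * #B.pages ≤ ∑ x ∈ B.pages, B.weight x + 320 := by
  have hind : ∀ S ⊆ B.pages, ∀ k, ∑ x ∈ B.pages, (if x ∈ S then k else 0) = #S * k := by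
    intro S hS k
    rw [sum_ite_mem, inter_eq_right.2 hS, sum_const, smul_eq_mul]
  have hsum := sum_le_sum fun x (hx : x ∈ B.pages) => three_add_le_weight_add hx
  simp only [sum_add_distrib, sum_const, smul_eq_mul] at hsum
  rw [hind B.donorPages (filter_subset _ _), hind B.sourcePages (filter_subset _ _),
    hind B.stuckPages (filter_subset _ _), hind B.sinkPages (filter_subset _ _),
    hind B.spinelessPages (filter_subset _ _), hind B.weakPages (filter_subset _ _)] at hsum
  have h₁ := card_stuckPages_le (B := B) hsat
  have h₂ := card_sinkPages_le (B := B)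
  have h₃ := card_spinelessPages_le (B := B) hsat
  omega

lemma sum_card_arrow_eq :
    ∑ x ∈ B.pages, #{p | B.Arrow x p} = ∑ x ∈ B.pages, #{p | B.Arrow p x} := by
  have h := sum_card_bipartiteAbove_eq_sum_card_bipartiteBelow (s := B.pages) (t := B.pages) B.Arrow
  refine (sum_congr rfl fun x _ => ?_).trans (h.trans (sum_congr rfl fun x _ => ?_)) <;>
    congr 1 <;> ext p
  · simp only [mem_filter, mem_univ, true_and, mem_bipartiteAbove]
    exact ⟨fun h => ⟨h.mem_right, h⟩, And.right⟩
  · simp only [mem_filter, mem_univ, true_and, mem_bipartiteBelow]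
    exact ⟨And.right, fun h => ⟨h.mem_left, h⟩⟩

lemma card_innerNbrs_ge :
    #{p | B.SpineColored x p} + #{p | B.Arrow x p} + #{p | B.Arrow p x} ≤ #(B.innerNbrs x) := by
  have h₁ : Disjoint ({p | B.SpineColored x p} : Finset V) ({p | B.Arrow x p} : Finset V) :=
    disjoint_filter.2 fun _ _ => SpineColored.not_arrow
  have h₂ : Disjoint (({p | B.SpineColored x p} : Finset V) ∪ ({p | B.Arrow x p} : Finset V))
      ({p | B.Arrow p x} : Finset V) := by
    rw [disjoint_union_left]
    exact ⟨disjoint_filter.2 fun _ _ h => h.symm.not_arrow,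
      disjoint_filter.2 fun _ _ => Arrow.asymm⟩
  rw [← card_union_of_disjoint h₁, ← card_union_of_disjoint h₂]
  refine card_le_card fun p hp => B.mem_innerNbrs.2 ?_
  simp only [mem_union, mem_filter, mem_univ, true_and] at hp
  rcases hp with (h | h) | h
  exacts [⟨h.mem_right, h.adj⟩, ⟨h.mem_right, h.adj⟩, ⟨h.mem_left, h.adj.symm⟩]

lemma sum_weight_le : ∑ x ∈ B.pages, B.weight x ≤
    ∑ x ∈ B.pages, #(B.innerNbrs x) + 2 * ∑ x ∈ B.pages, #(B.outerNbrs x) := by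
  have h₁ := sum_le_sum fun x (_ : x ∈ B.pages) => card_innerNbrs_ge (B := B) (x := x)
  have h₂ := sum_card_arrow_eq (B := B)
  simp only [weight, sum_add_distrib, ← mul_sum] at h₁ ⊢
  omega

lemma degree_page (hx : x ∈ B.pages) :
    G.degree x = 2 + #(B.innerNbrs x) + #(B.outerNbrs x) := by
  have hlx := left_adj hx
  have hrx := right_adj hx
  have hdisj : Disjoint (B.innerNbrs x) (B.outerNbrs x) :=
    Finset.disjoint_left.2 fun p hp hp' => (B.mem_outerNbrs.1 hp').2.1 (B.mem_innerNbrs.1 hp).1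
  have heq : G.neighborFinset x =
      insert B.left (insert B.right (B.innerNbrs x ∪ B.outerNbrs x)) := by
    ext p
    simp only [mem_neighborFinset, mem_insert, mem_union, mem_innerNbrs, mem_outerNbrs]
    grind [G.adj_comm]
  rw [← card_neighborFinset_eq_degree, heq, card_insert_of_notMem, card_insert_of_notMem,
    card_union_of_disjoint hdisj]
  · omega
  · simp
  · simp [B.adj.ne]

lemma card_pages_lt_degree_left : #B.pages < G.degree B.left := by
  refine card_lt_card (ssubset_iff_of_subset (fun x hx => ?_) |>.2 ⟨B.right, ?_, ?_⟩)
  · simpa using left_adj hx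
  · simpa using B.adj
  · exact B.right_notMem_pages

lemma card_pages_lt_degree_right : #B.pages < G.degree B.right := by
  rw [← pages_flip]; exact card_pages_lt_degree_left

lemma sum_card_outerNbrs_le :
    ∑ x ∈ B.pages, #(B.outerNbrs x) ≤
      ∑ v ∈ (insert B.left (insert B.right B.pages))ᶜ, G.degree v := by
  have h := sum_card_bipartiteAbove_eq_sum_card_bipartiteBelow (s := B.pages)
    (t := (insert B.left (insert B.right B.pages))ᶜ) G.Adj
  calc ∑ x ∈ B.pages, #(B.outerNbrs x)
    _ ≤ ∑ x ∈ B.pages, #(bipartiteAbove G.Adj (insert B.left (insert B.right B.pages))ᶜ x) := by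
      refine sum_le_sum fun x _ => card_le_card fun p hp => ?_
      rw [mem_outerNbrs] at hp
      simp only [mem_bipartiteAbove, mem_compl, mem_insert]
      tauto
    _ = _ := h
    _ ≤ _ := by
      refine sum_le_sum fun v _ => card_le_card fun x hx => ?_
      simpa [G.adj_comm] using ((mem_bipartiteBelow _).1 hx).2

lemma sum_degree_ge : 2 + 4 * #B.pages + ∑ x ∈ B.pages, #(B.innerNbrs x) +
    2 * ∑ x ∈ B.pages, #(B.outerNbrs x) ≤ ∑ v, G.degree v := by
  rw [← sum_add_sum_compl (insert B.left (insert B.right B.pages)),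
    sum_insert (by simp [B.adj.ne]), sum_insert B.right_notMem_pages,
    sum_congr rfl fun x hx => degree_page hx]
  simp only [sum_add_distrib, sum_const, smul_eq_mul]
  have h₁ := card_pages_lt_degree_left (B := B)
  have h₂ := card_pages_lt_degree_right (B := B)
  have h₃ := sum_card_outerNbrs_le (B := B)
  omega

lemma seven_mul_card_pages_le (hsat : IsRainbowSat G (⊤ : SimpleGraph (Fin 4))) :
    7 * #B.pages + 2 ≤ ∑ v, G.degree v + 320 := by
  wlog hweak : #B.weakPages ≤ 64 generalizing B
  · rw [← pages_flip]
    exact this (card_weakPages_le_or hsat |>.resolve_left hweak)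
  have h₁ := three_mul_card_pages_le hsat hweak
  have h₂ := sum_weight_le (B := B)
  have h₃ := sum_degree_ge (B := B)
  omega

end Book

section Degrees

variable [Fintype V] {L : ℕ} {d : V}

lemma seven_mul_card_inter_neighborFinset_le (hsat : IsRainbowSat G (⊤ : SimpleGraph (Fin 4)))
    (hbd : G.Adj b d) :
    7 * #(G.neighborFinset b ∩ G.neighborFinset d) + 2 ≤ ∑ v, G.degree v + 320 := by
  obtain ⟨c₀, hproper, hrainbow⟩ := hsat.1
  obtain ⟨c, hc⟩ := (IsRainbowK4Free.of_not_hasRainbowCopy hproper hrainbow).exists_isNormalColoring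
  let B : Book G c := ⟨b, d, hbd, hc⟩
  have hpages : B.pages = G.neighborFinset b ∩ G.neighborFinset d := by
    ext; simp [B]
  rw [← hpages]
  exact B.seven_mul_card_pages_le hsat

lemma seven_mul_card_le_of_degree_le_two (hsat : IsRainbowSat G (⊤ : SimpleGraph (Fin 4)))
    (hv : G.degree v ≤ 2) : 7 * Fintype.card V ≤ ∑ v, G.degree v + 332 := by
  by_cases hall : ∀ u, u ≠ v → G.Adj v u
  · have hsub : (univ : Finset V) ⊆ insert v (G.neighborFinset v) := by
      intro u _
      by_cases huv : u = v
      · simp [huv]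
      · simp [hall u huv]
    have := (card_le_card hsub).trans (card_insert_le _ _)
    rw [card_univ, card_neighborFinset_eq_degree] at this
    omega
  · push Not at hall
    obtain ⟨u, huv, hadj⟩ := hall
    obtain ⟨p, q, hvp, hvq, -, -, hpq⟩ := exists_adj_common hsat huv.symm hadj
    have hN : {p, q} = G.neighborFinset v :=
      eq_of_subset_of_card_le (by simp [insert_subset_iff, hvp, hvq])
        (by rwa [card_pair hpq.ne, card_neighborFinset_eq_degree])
    have hsub : (univ : Finset V) ⊆ {p, q} ∪ (G.neighborFinset p ∩ G.neighborFinset q) := by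
      intro w _
      simp only [mem_union, mem_inter, mem_neighborFinset]
      by_cases hvw : v = w
      · exact .inr (hvw ▸ ⟨hvp.symm, hvq.symm⟩)
      by_cases hw : G.Adj v w
      · exact .inl (by simpa [hN] using hw)
      obtain ⟨p', q', hvp', hvq', hwp', hwq', hpq'⟩ := exists_adj_common hsat hvw hw
      rw [← mem_neighborFinset, ← hN, mem_insert, mem_singleton] at hvp' hvq'
      grind [hpq'.ne, hwp'.symm, hwq'.symm]
    have hcard := (card_le_card hsub).trans (card_union_le _ _)
    rw [card_univ, card_pair hpq.ne] at hcard
    have := seven_mul_card_inter_neighborFinset_le hsat hpq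
    omega

/-- The neighbours of `v` of degree more than `L`. -/
noncomputable def highNbrs (G : SimpleGraph V) (L : ℕ) (v : V) : Finset V :=
  {p ∈ G.neighborFinset v | L < G.degree p}

/-- The neighbours of `v` of degree at most `L`. -/
noncomputable def lowNbrs (G : SimpleGraph V) (L : ℕ) (v : V) : Finset V :=
  {p ∈ G.neighborFinset v | ¬ L < G.degree p}

lemma card_highNbrs_add_card_lowNbrs :
    #(highNbrs G L v) + #(lowNbrs G L v) = G.degree v := by
  rw [highNbrs, lowNbrs, card_filter_add_card_filter_not, card_neighborFinset_eq_degree]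

lemma exists_adj_common_of_mem_compl (hsat : IsRainbowSat G (⊤ : SimpleGraph (Fin 4)))
    (hu : u ∈ (insert v (G.neighborFinset v))ᶜ) :
    ∃ p q, G.Adj v p ∧ G.Adj v q ∧ G.Adj u p ∧ G.Adj u q ∧ G.Adj p q := by
  simp only [mem_compl, mem_insert, mem_neighborFinset, not_or] at hu
  exact exists_adj_common hsat (Ne.symm hu.1) hu.2

lemma card_compl_insert_neighborFinset :
    #(insert v (G.neighborFinset v))ᶜ = Fintype.card V - (G.degree v + 1) := by
  rw [card_compl, card_insert_of_notMem (by simp), card_neighborFinset_eq_degree]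

lemma card_mul_two_sub_card_highNbrs_le (hsat : IsRainbowSat G (⊤ : SimpleGraph (Fin 4))) :
    (Fintype.card V - (G.degree v + 1)) * (2 - #(highNbrs G L v)) ≤ #(lowNbrs G L v) * L := by
  rw [← card_compl_insert_neighborFinset]
  refine card_mul_le_card_mul G.Adj (fun u hu => ?_) fun p hp => ?_
  · obtain ⟨p, q, hvp, hvq, hup, huq, hpq⟩ := exists_adj_common_of_mem_compl hsat hu
    have hsub : {p, q} ⊆ highNbrs G L v ∪ bipartiteAbove G.Adj (lowNbrs G L v) u := by
      simp only [insert_subset_iff, singleton_subset_iff, mem_union, highNbrs, lowNbrs,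
        mem_bipartiteAbove, mem_filter, mem_neighborFinset]
      tauto
    have := (card_le_card hsub).trans (card_union_le _ _)
    rw [card_pair hpq.ne] at this
    omega
  · refine (card_le_card (t := G.neighborFinset p) fun u hu => ?_).trans
      (not_lt.1 (mem_filter.1 hp).2)
    simpa [G.adj_comm] using ((mem_bipartiteBelow _).1 hu).2

lemma card_le_of_highNbrs_eq_pair (hsat : IsRainbowSat G (⊤ : SimpleGraph (Fin 4)))
    (hH : highNbrs G L v = {b, d}) : Fintype.card V - (G.degree v + 1) ≤
      #(lowNbrs G L v) * L +
        if G.Adj b d then #(G.neighborFinset b ∩ G.neighborFinset d) else 0 := by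
  have hsub : (insert v (G.neighborFinset v))ᶜ ⊆ (lowNbrs G L v).biUnion (G.neighborFinset ·) ∪
      if G.Adj b d then G.neighborFinset b ∩ G.neighborFinset d else ∅ := by
    intro u hu
    obtain ⟨p, q, hvp, hvq, hup, huq, hpq⟩ := exists_adj_common_of_mem_compl hsat hu
    have hcase : ∀ x, G.Adj v x → G.Adj u x →
        x = b ∨ x = d ∨ u ∈ (lowNbrs G L v).biUnion (G.neighborFinset ·) := by
      intro x hvx hux
      by_cases hx : L < G.degree x
      · have : x ∈ highNbrs G L v := mem_filter.2 ⟨by simpa, hx⟩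
        rw [hH, mem_insert, mem_singleton] at this
        tauto
      · exact .inr (.inr (mem_biUnion.2 ⟨x, mem_filter.2 ⟨by simpa, hx⟩, by simpa using hux.symm⟩))
    rw [mem_union]
    rcases hcase p hvp hup with rfl | rfl | h
    · rcases hcase q hvq huq with rfl | rfl | h
      · exact absurd rfl hpq.ne
      · rw [if_pos hpq]
        simp [hup.symm, huq.symm]
      · exact .inl h
    · rcases hcase q hvq huq with rfl | rfl | h
      · rw [if_pos hpq.symm]
        simp [hup.symm, huq.symm]
      · exact absurd rfl hpq.ne
      · exact .inl h
    · exact .inl h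
  rw [← card_compl_insert_neighborFinset]
  refine (card_le_card hsub).trans ((card_union_le _ _).trans (Nat.add_le_add ?_ ?_))
  · exact card_biUnion_le_card_mul _ _ _ fun p hp => not_lt.1 (mem_filter.1 hp).2
  · split_ifs <;> simp

lemma exists_adj_card_le_or (hsat : IsRainbowSat G (⊤ : SimpleGraph (Fin 4)))
    (hL : 4 * L + 7 < Fintype.card V) (hv : G.degree v + #(highNbrs G L v) ≤ 6) :
    (∃ b d, G.Adj b d ∧
      Fintype.card V ≤ #(G.neighborFinset b ∩ G.neighborFinset d) + 2 * L + 5) ∨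
      G.degree v = 3 ∧ lowNbrs G L v = ∅ := by
  have hdeg := card_highNbrs_add_card_lowNbrs (G := G) (L := L) (v := v)
  have hcount := card_mul_two_sub_card_highNbrs_le (v := v) (L := L) hsat
  have hlow : ∀ k, #(lowNbrs G L v) ≤ k → #(lowNbrs G L v) * L ≤ k * L :=
    fun k hk => Nat.mul_le_mul_right L hk
  rcases (by omega : #(highNbrs G L v) = 0 ∨ #(highNbrs G L v) = 1 ∨ #(highNbrs G L v) = 2 ∨
    #(highNbrs G L v) = 3) with h | h | h | h
  · rw [h] at hcount
    have := hlow 6 (by omega)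
    omega
  · rw [h] at hcount
    have := hlow 4 (by omega)
    omega
  · obtain ⟨b, d, -, hH⟩ := card_eq_two.1 h
    have hpair := card_le_of_highNbrs_eq_pair hsat hH
    have := hlow 2 (by omega)
    split_ifs at hpair with hbd
    · exact .inl ⟨b, d, hbd, by omega⟩
    · omega
  · exact .inr ⟨by omega, card_eq_zero.1 (by omega)⟩

lemma card_filter_degree_le_three (hsat : IsRainbowSat G (⊤ : SimpleGraph (Fin 4)))
    (hL : 3 ≤ L) : #{v | G.degree v = 3 ∧ lowNbrs G L v = ∅} ≤ 3 := by
  refine card_le_three_of_isIndepSet hsat (fun u hu v hv _ huv => ?_) fun v hv =>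
    (mem_filter.1 hv).2.1
  simp only [coe_filter, mem_univ, true_and, Set.mem_ofPred_eq] at hu hv
  have : v ∈ lowNbrs G L u := mem_filter.2 ⟨by simpa, by omega⟩
  simp [hu.2] at this

lemma sum_degree_add_card_highNbrs_le :
    ∑ v with ¬ L < G.degree v, (G.degree v + #(highNbrs G L v)) ≤ ∑ v, G.degree v := by
  have h := sum_card_bipartiteAbove_eq_sum_card_bipartiteBelow
    (s := ({v | ¬ L < G.degree v} : Finset V)) (t := ({v | L < G.degree v} : Finset V)) G.Adj
  have hhigh : ∑ v with ¬ L < G.degree v, #(highNbrs G L v) ≤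
      ∑ v with L < G.degree v, G.degree v := by
    calc ∑ v with ¬ L < G.degree v, #(highNbrs G L v)
      _ = ∑ v with ¬ L < G.degree v, #(bipartiteAbove G.Adj {v | L < G.degree v} v) :=
        sum_congr rfl fun v _ => congrArg _ (by ext; simp [highNbrs, and_comm])
      _ = _ := h
      _ ≤ _ := sum_le_sum fun p _ => card_le_card fun u hu => by
        simpa [G.adj_comm] using ((mem_bipartiteBelow _).1 hu).2
  rw [sum_add_distrib, ← sum_filter_add_sum_filter_not univ (L < G.degree ·)]
  omega

lemma card_high_mul_le : #{v | L < G.degree v} * (L + 1) ≤ ∑ v, G.degree v := by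
  refine le_trans ?_ (sum_le_sum_of_subset (filter_subset (L < G.degree ·) univ))
  rw [← smul_eq_mul]
  exact card_nsmul_le_sum _ _ _ fun v hv => (mem_filter.1 hv).2

lemma exists_adj_card_le_or_seven_mul_card_le (hsat : IsRainbowSat G (⊤ : SimpleGraph (Fin 4)))
    (hL : 3 ≤ L) (hn : 4 * L + 7 < Fintype.card V) :
    (∃ b d, G.Adj b d ∧
      Fintype.card V ≤ #(G.neighborFinset b ∩ G.neighborFinset d) + 2 * L + 5) ∨
      7 * Fintype.card V ≤ ∑ v, G.degree v + 7 * #{v | L < G.degree v} + 21 := by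
  by_contra! hcon
  obtain ⟨hbook, hlt⟩ := hcon
  refine hlt.not_ge ?_
  set low : Finset V := {v | ¬ L < G.degree v}
  set exceptional : Finset V := {v | G.degree v = 3 ∧ lowNbrs G L v = ∅}
  have hseven : ∀ v ∈ low \ exceptional, 7 ≤ G.degree v + #(highNbrs G L v) := by
    intro v hv
    by_contra! hlt
    rcases exists_adj_card_le_or hsat hn (v := v) (by omega) with ⟨b, d, hbd, hle⟩ | hv'
    · exact (hbook b d hbd).not_ge hle
    · exact (mem_sdiff.1 hv).2 (by simpa [exceptional] using hv')
  have hsum := (card_nsmul_le_sum _ _ _ hseven).trans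
    ((sum_le_sum_of_subset sdiff_subset).trans (sum_degree_add_card_highNbrs_le (L := L)))
  have hsdiff := le_card_sdiff exceptional low
  have hexc : #exceptional ≤ 3 := card_filter_degree_le_three hsat hL
  have hcard : #{v | L < G.degree v} + #low = Fintype.card V := by
    rw [← card_univ]
    exact card_filter_add_card_filter_not _
  rw [smul_eq_mul] at hsum
  omega

lemma seven_mul_card_le_of_card_le_four_mul (hsat : IsRainbowSat G (⊤ : SimpleGraph (Fin 4)))
    {t : ℝ} (ht : 21 ≤ t) (hn : Fintype.card V ≤ 4 * t) :
    (7 * Fintype.card V : ℝ) ≤ ∑ v, G.degree v + 16 * t := by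
  by_cases hdeg : ∃ v, G.degree v ≤ 2
  · obtain ⟨v, hv⟩ := hdeg
    have : (7 * Fintype.card V : ℝ) ≤ ∑ v, G.degree v + 332 := by
      exact_mod_cast seven_mul_card_le_of_degree_le_two hsat hv
    linarith
  · push Not at hdeg
    have hsum := card_nsmul_le_sum univ (G.degree ·) 3 fun v _ => hdeg v
    rw [card_univ, smul_eq_mul] at hsum
    have : (Fintype.card V * 3 : ℝ) ≤ ∑ v, G.degree v := by exact_mod_cast hsum
    linarith

lemma seven_mul_card_le_of_four_mul_lt_card (hsat : IsRainbowSat G (⊤ : SimpleGraph (Fin 4)))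
    {t : ℝ} (ht : 163 ≤ t) (hsq : 7 * Fintype.card V ≤ t ^ 2) (hn : 4 * t < Fintype.card V) :
    (7 * Fintype.card V : ℝ) ≤ ∑ v, G.degree v + 16 * t := by
  obtain ⟨L, hL⟩ : ∃ L, ⌊t⌋₊ = L + 2 :=
    Nat.exists_eq_add_of_le' (Nat.le_floor (by push_cast; linarith))
  have hLt : (L + 2 : ℝ) ≤ t := by
    exact_mod_cast hL ▸ Nat.floor_le (by linarith : 0 ≤ t)
  have htL : t < L + 3 := by
    have := Nat.lt_floor_add_one t
    rw [hL] at this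
    push_cast at this
    linarith
  have hL3 : 3 ≤ L := by
    have : (3 : ℝ) ≤ L := by linarith
    exact_mod_cast this
  have hLn : 4 * L + 7 < Fintype.card V := by
    have : (4 * L + 7 : ℝ) < Fintype.card V := by linarith
    exact_mod_cast this
  rcases exists_adj_card_le_or_seven_mul_card_le hsat hL3 hLn with ⟨b, d, hbd, hbook⟩ | hhigh
  · have hle : 7 * Fintype.card V ≤ ∑ v, G.degree v + 14 * L + 353 := by
      have := seven_mul_card_inter_neighborFinset_le hsat hbd
      omega
    have : (7 * Fintype.card V : ℝ) ≤ ∑ v, G.degree v + 14 * L + 353 := by exact_mod_cast hle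
    linarith
  · by_contra! hlt
    have hhigh : (7 * Fintype.card V : ℝ) ≤
        ∑ v, G.degree v + 7 * #{v | L < G.degree v} + 21 := by exact_mod_cast hhigh
    have hmul : (#{v | L < G.degree v} * (L + 1) : ℝ) ≤ ∑ v, G.degree v := by
      exact_mod_cast card_high_mul_le (G := G) (L := L)
    have hgt : t + 20 < #{v | L < G.degree v} := by linarith
    nlinarith [hgt]

end Degrees

end RainbowK4

theorem stmt_10_general {V : Type} [Fintype V] (α : ℝ)
    (h1 : 7 ≤ α ^ 2 * (Fintype.card V : ℝ)) (h2 : 163 ≤ α * (Fintype.card V : ℝ))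
    (G : SimpleGraph V) (hsat : IsRainbowSat G (⊤ : SimpleGraph (Fin 4))) :
    7 / 2 * (Fintype.card V : ℝ) - 8 * α * (Fintype.card V : ℝ) ≤ (G.edgeSet.ncard : ℝ) := by
  classical
  have hsum : (↑(∑ v, G.degree v) : ℝ) = 2 * G.edgeSet.ncard := by
    rw [← coe_edgeFinset, Set.ncard_coe_finset]
    exact_mod_cast G.sum_degrees_eq_twice_card_edges
  have hsq : 7 * (Fintype.card V : ℝ) ≤ (α * Fintype.card V) ^ 2 := by
    nlinarith [mul_le_mul_of_nonneg_right h1 (Fintype.card V).cast_nonneg (α := ℝ)]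
  suffices (7 * Fintype.card V : ℝ) ≤ ∑ v, G.degree v + 16 * (α * Fintype.card V) by
    rw [hsum] at this
    linarith
  rcases le_or_gt (Fintype.card V : ℝ) (4 * (α * Fintype.card V)) with hn | hn
  · exact RainbowK4.seven_mul_card_le_of_card_le_four_mul hsat (by linarith) hn
  · exact RainbowK4.seven_mul_card_le_of_four_mul_lt_card hsat h2 hsq hn

/-- Lower bound `(7/2)n - 8αn` for the number of edges of an `n`-vertex
rainbow `K_4`-saturated graph, when `0 < α < 1/2`, `α²n ≥ 7` and `αn > 220`. -/
theorem stmt_10 (α : ℝ) (hα0 : 0 < α) (hα : α < 1 / 2) (n : ℕ)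
    (h1 : 7 ≤ α ^ 2 * (n : ℝ)) (h2 : 220 < α * (n : ℝ))
    (G : SimpleGraph (Fin n))
    (hsat : IsRainbowSat G (⊤ : SimpleGraph (Fin 4))) :
    7 / 2 * (n : ℝ) - 8 * α * (n : ℝ) ≤ (G.edgeSet.ncard : ℝ) := by
  simpa using stmt_10_general α (by simpa using h1) (by simpa using by linarith) G hsat
end

section
/- For every n ≥ 6 there exists an n-vertex rainbow K_4-saturated graph with at most (7/2)n edges. -/
open SimpleGraph

/-!
Glue copies of `K₆` along a common edge (the spine), the last copy possibly truncated.

In a properly coloured `K₆` without rainbow `K₄`, count the tuples `(a, b, u, w)` of distinct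
vertices with `c(ab) = c(uw)`. Each of the 15 copies of `K₄` carries two disjoint edges of the same
colour, which gives at least as many tuples as there are triples `(a, b, u)`; properness allows at
most one `w` for each triple. Hence every triple has exactly one `w`: every colour occurs at every
vertex. If now `v` lies outside the `K₆` and is adjacent to its vertices `x, y, z`, the colour of
an edge of `xyz` is already taken at the opposite vertex, so it is not reused by the edge to `v`,
and `x, y, z, v` span a rainbow `K₄`. Adding any edge to the glued graph creates this configuration,
with `x, y` the spine.

Conversely, the cyclic one-factorization of `K₆` makes no `K₄` rainbow, and colouring all
copies by it, with disjoint palettes except for the colour of the spine, colours the glued graph.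
-/

theorem isProperEdgeColoring_iff {V : Type} {G : SimpleGraph V} {c : Sym2 V → ℕ} :
    IsProperEdgeColoring G c ↔
      ∀ v i j, G.Adj v i → G.Adj v j → c s(v, i) = c s(v, j) → i = j := by
  constructor
  · intro hc v i j hi hj heq
    by_contra hij
    exact hc _ hi _ hj (fun h => hij (Sym2.congr_right.1 h)) ⟨v, by simp, by simp⟩ heq
  · rintro hc _ h₁ _ h₂ hne ⟨v, ⟨i, rfl⟩, ⟨j, rfl⟩⟩ heq
    exact hne (congrArg (s(v, ·)) (hc v i j h₁ h₂ heq))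

theorem sym2_fin_four_common_vertex_or_matching :
    ∀ e₁ e₂ : Sym2 (Fin 4), ¬ e₁.IsDiag → ¬ e₂.IsDiag → (∃ v, v ∈ e₁ ∧ v ∈ e₂) ∨
      s(e₁, e₂) = s(s(0, 1), s(2, 3)) ∨ s(e₁, e₂) = s(s(0, 2), s(1, 3)) ∨
        s(e₁, e₂) = s(s(0, 3), s(1, 2)) := by
  decide +kernel

/-- Double counting: summed over the group, both expressions give three times the total of `X`. -/
theorem translates_sum_eq_of_le_of_le {Γ : Type*} [Group Γ] [Finite Γ] {X : Γ → ℕ} {m : ℕ}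
    {a b a' b' : Γ} (hge : ∀ σ, m ≤ X σ + X (σ * a) + X (σ * b))
    (hle : ∀ σ, X σ + X (σ * a') + X (σ * b') ≤ m) (σ : Γ) :
    X σ + X (σ * a') + X (σ * b') = m := by
  have := Fintype.ofFinite Γ
  have sum_translate (τ : Γ) : ∑ σ, X (σ * τ) = ∑ σ, X σ :=
    Equiv.sum_comp (Equiv.mulRight τ) X
  refine (hle σ).antisymm (not_lt.1 fun hσ => ?_)
  have hlt := Finset.sum_lt_sum (fun σ _ => hle σ) ⟨σ, Finset.mem_univ σ, hσ⟩
  have hsum := Finset.sum_le_sum fun σ (_ : σ ∈ Finset.univ) => hge σ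
  simp only [Finset.sum_add_distrib, sum_translate] at hlt hsum
  exact hsum.not_gt hlt

section RainbowK4

variable {V : Type} {G : SimpleGraph V} {c : Sym2 V → ℕ}

theorem IsProperEdgeColoring.hasRainbowCopy_top_fin_four_iff (hc : IsProperEdgeColoring G c) :
    HasRainbowCopy G (⊤ : SimpleGraph (Fin 4)) c ↔
      ∃ p q r s, [p, q, r, s].Pairwise G.Adj ∧
        c s(p, q) ≠ c s(r, s) ∧ c s(p, r) ≠ c s(q, s) ∧ c s(p, s) ≠ c s(q, r) := by
  constructor
  · rintro ⟨f, -, hadj, hrainbow⟩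
    refine ⟨f 0, f 1, f 2, f 3, ?_, hrainbow s(0, 1) ?_ s(2, 3) ?_ ?_,
      hrainbow s(0, 2) ?_ s(1, 3) ?_ ?_, hrainbow s(0, 3) ?_ s(1, 2) ?_ ?_⟩
    · simp [hadj]
    all_goals simp
  · rintro ⟨p, q, r, s, hpw, hpq, hpr, hps⟩
    set f : Fin 4 → V := [p, q, r, s].get
    have hadj (a b : Fin 4) (hab : a ≠ b) : G.Adj (f a) (f b) := by
      rcases lt_or_gt_of_ne hab with h | h
      · exact List.pairwise_iff_get.1 hpw a b h
      · exact (List.pairwise_iff_get.1 hpw b a h).symm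
    have hinj : Function.Injective f := fun a b hab => by
      by_contra hne
      exact (hadj a b hne).ne hab
    have hedge : ∀ e ∈ (⊤ : SimpleGraph (Fin 4)).edgeSet, e.map f ∈ G.edgeSet :=
      Sym2.ind fun a b hab => hadj a b hab
    refine ⟨f, hinj, hadj, fun e₁ he₁ e₂ he₂ hne => ?_⟩
    rcases sym2_fin_four_common_vertex_or_matching e₁ e₂ (not_isDiag_of_mem_edgeSet _ he₁)
      (not_isDiag_of_mem_edgeSet _ he₂) with ⟨v, hv₁, hv₂⟩ | hdisj
    · exact hc _ (hedge _ he₁) _ (hedge _ he₂) ((Sym2.map.injective hinj).ne hne)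
        ⟨f v, Sym2.mem_map.2 ⟨v, hv₁, rfl⟩, Sym2.mem_map.2 ⟨v, hv₂, rfl⟩⟩
    · simp only [Sym2.eq_iff] at hdisj
      rcases hdisj with (⟨rfl, rfl⟩ | ⟨rfl, rfl⟩) | (⟨rfl, rfl⟩ | ⟨rfl, rfl⟩) |
        (⟨rfl, rfl⟩ | ⟨rfl, rfl⟩)
      exacts [hpq, hpq.symm, hpr, hpr.symm, hps, hps.symm]

theorem IsProperEdgeColoring.color_eq_of_hom_top_fin_six (hc : IsProperEdgeColoring G c)
    (hfree : ¬ HasRainbowCopy G (⊤ : SimpleGraph (Fin 4)) c)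
    (f : (⊤ : SimpleGraph (Fin 6)) →g G) :
    c s(f 2, f 3) = c s(f 0, f 1) ∨ c s(f 2, f 4) = c s(f 0, f 1) ∨
      c s(f 2, f 5) = c s(f 0, f 1) := by
  -- Translation by a transposition carries the pair of edges tested by `X` to the other matchings
  -- of the `K₄` on `σ 0, …, σ 3`, or replaces the edge `σ 2, σ 3` by another edge at `σ 2`.
  let X (σ : Equiv.Perm (Fin 6)) : ℕ :=
    if c s(f (σ 2), f (σ 3)) = c s(f (σ 0), f (σ 1)) then 1 else 0
  have hadj (σ : Equiv.Perm (Fin 6)) {i j : Fin 6} (hij : i ≠ j) : G.Adj (f (σ i)) (f (σ j)) :=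
    f.map_adj (σ.injective.ne hij)
  have one_le_matchings (σ) : 1 ≤ X σ + X (σ * Equiv.swap 1 2) + X (σ * Equiv.swap 1 3) := by
    by_contra! hX
    refine hfree (hc.hasRainbowCopy_top_fin_four_iff.2
      ⟨f (σ 0), f (σ 1), f (σ 2), f (σ 3), by simp [hadj], ?_, ?_, ?_⟩)
    all_goals
      intro heq
      simp [X, Equiv.swap_apply_def, heq, Sym2.eq_swap] at hX
  have star_le_one (σ) : X σ + X (σ * Equiv.swap 3 4) + X (σ * Equiv.swap 3 5) ≤ 1 := by
    have color_ne {i j : Fin 6} (hi : 2 ≠ i) (hj : 2 ≠ j) (hij : i ≠ j) :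
        c s(f (σ 2), f (σ i)) ≠ c s(f (σ 2), f (σ j)) := fun heq =>
      (hadj σ hij).ne (isProperEdgeColoring_iff.1 hc _ _ _ (hadj σ hi) (hadj σ hj) heq)
    have h34 := @color_ne 3 4 (by decide) (by decide) (by decide)
    have h35 := @color_ne 3 5 (by decide) (by decide) (by decide)
    have h45 := @color_ne 4 5 (by decide) (by decide) (by decide)
    simp only [X, Equiv.Perm.coe_mul, Function.comp_apply, Equiv.swap_apply_def,
      Fin.reduceEq, ↓reduceIte]
    split_ifs <;> omega
  have star_eq_one := translates_sum_eq_of_le_of_le one_le_matchings star_le_one 1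
  by_contra! hcon
  simp [X, Equiv.swap_apply_def, hcon] at star_eq_one

theorem IsProperEdgeColoring.exists_mem_color_eq_of_isNClique_six
    (hc : IsProperEdgeColoring G c) (hfree : ¬ HasRainbowCopy G (⊤ : SimpleGraph (Fin 4)) c)
    {s : Finset V} (hs : G.IsNClique 6 s) {a b u : V} (ha : a ∈ s) (hb : b ∈ s) (hu : u ∈ s)
    (hab : a ≠ b) (hau : a ≠ u) (hbu : b ≠ u) :
    ∃ w ∈ s, G.Adj u w ∧ c s(u, w) = c s(a, b) := by
  classical
  obtain ⟨g, hg⟩ := Finset.exists_equiv_extend_of_card_eq (α := Fin 6) (t := s)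
    (by simp [hs.card_eq]) (s := {0, 1, 2}) (f := ![a, b, u, u, u, u])
    (by simp [Finset.insert_subset_iff, ha, hb, hu])
    (by simp [Set.InjOn, hab, hau, hbu, hab.symm, hau.symm, hbu.symm])
  obtain ⟨hg0, hg1, hg2⟩ : (g 0 : V) = a ∧ (g 1 : V) = b ∧ (g 2 : V) = u := by simp [hg]
  let f : (⊤ : SimpleGraph (Fin 6)) →g G :=
    ⟨fun i => g i, fun hij => hs.isClique (g _).2 (g _).2 (by simpa using hij)⟩
  have hf (i : Fin 6) (hi : 2 ≠ i) : G.Adj u (g i) := hg2 ▸ f.map_adj hi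
  have hcol := hc.color_eq_of_hom_top_fin_six hfree f
  simp only [f, RelHom.coeFn_mk, hg0, hg1, hg2] at hcol
  rcases hcol with h | h | h
  · exact ⟨g 3, (g 3).2, hf 3 (by decide), h⟩
  · exact ⟨g 4, (g 4).2, hf 4 (by decide), h⟩
  · exact ⟨g 5, (g 5).2, hf 5 (by decide), h⟩

theorem IsProperEdgeColoring.hasRainbowCopy_of_isNClique_six (hc : IsProperEdgeColoring G c)
    {s : Finset V} (hs : G.IsNClique 6 s) {x y z v : V} (hx : x ∈ s) (hy : y ∈ s) (hz : z ∈ s)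
    (hxy : x ≠ y) (hxz : x ≠ z) (hyz : y ≠ z) (hv : v ∉ s)
    (hxv : G.Adj x v) (hyv : G.Adj y v) (hzv : G.Adj z v) :
    HasRainbowCopy G (⊤ : SimpleGraph (Fin 4)) c := by
  by_contra hfree
  have color_ne {a b u : V} (ha : a ∈ s) (hb : b ∈ s) (hu : u ∈ s) (hab : a ≠ b) (hau : a ≠ u)
      (hbu : b ≠ u) (huv : G.Adj u v) : c s(a, b) ≠ c s(u, v) := by
    intro heq
    obtain ⟨w, hw, huw, hcol⟩ :=
      hc.exists_mem_color_eq_of_isNClique_six hfree hs ha hb hu hab hau hbu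
    exact hv (isProperEdgeColoring_iff.1 hc u w v huw huv (hcol.trans heq) ▸ hw)
  refine hfree (hc.hasRainbowCopy_top_fin_four_iff.2 ⟨x, y, z, v, ?_, ?_, ?_, ?_⟩)
  · simp [hs.isClique hx hy hxy, hs.isClique hx hz hxz, hs.isClique hy hz hyz, hxv, hyv, hzv]
  · exact color_ne hx hy hz hxy hxz hyz hzv
  · exact color_ne hx hz hy hxz hxy hyz.symm hyv
  · exact (color_ne hy hz hx hyz hxy.symm hxz.symm hxv).symm

end RainbowK4

/-- The colour of the pair `p, q` in the cyclic one-factorization of `K₆`: the vertices are the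
residues modulo `5` and a point at infinity, encoded as `5`; the pair `p, q` gets the colour
`p + q` and the pair `p, ∞` gets the colour `2 * p`. -/
def factorColor (p q : Fin 6) : ℕ :=
  if p = 5 then 2 * q % 5 else if q = 5 then 2 * p % 5 else (p + q : ℕ) % 5

theorem factorColor_comm : ∀ p q, factorColor p q = factorColor q p := by
  decide

theorem factorColor_right_injective : ∀ p q r, p ≠ q → p ≠ r →
    factorColor p q = factorColor p r → q = r := by
  decide +kernel

theorem factorColor_matching : ∀ p q r s, [p, q, r, s].Pairwise (· ≠ ·) →
    factorColor p q = factorColor r s ∨ factorColor p r = factorColor q s ∨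
      factorColor p s = factorColor q r := by
  decide +kernel

/-- The index of the page of the book graph on which the vertex `i` lies. The vertices `0, 1` form
the spine, with index `0`; after them, four consecutive vertices at a time share an index. -/
def pageIndex (i : ℕ) : ℕ := (i + 2) / 4

/-- The vertex of the factorized `K₆` corresponding to the vertex `i` of the book graph. The spine
gets the slots `0` and `5` (infinity), so that its edge has colour `0`. -/
def slot (i : ℕ) : Fin 6 :=
  ⟨if i < 2 then 5 * i else i % 4 + 1, by split_ifs <;> omega⟩

theorem pageIndex_eq_zero_iff_slot {i : ℕ} : pageIndex i = 0 ↔ slot i = 0 ∨ slot i = 5 := by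
  simp only [pageIndex, slot, Fin.ext_iff]
  split_ifs <;> simp <;> omega

theorem factorColor_spine : ∀ p q, (p = 0 ∨ p = 5) →
    (factorColor p q = 0 ↔ q = 0 ∨ q = 5) := by
  decide

/-- The graph `K₂ ∨ (K₄ ∪ ⋯ ∪ K₄ ∪ Kᵣ)` on `n` vertices, where `r ≤ 4`: copies of `K₆`
sharing the edge between `0` and `1`. -/
def bookGraph (n : ℕ) : SimpleGraph (Fin n) where
  Adj i j := i ≠ j ∧ (pageIndex i = 0 ∨ pageIndex j = 0 ∨ pageIndex i = pageIndex j)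
  symm := ⟨fun _ _ h => ⟨h.1.symm, by omega⟩⟩
  loopless := ⟨fun _ h => h.1 rfl⟩

/-- The `g`-th page of the book graph, spine included. -/
def page (n g : ℕ) : Finset (Fin n) := {i | pageIndex i = 0 ∨ pageIndex i = g}

/-- The colouring of the book graph which restricts to `factorColor` on every page. Multiplying the
page index by the colour makes the palettes of the pages disjoint except for the colour `0`. -/
def bookColor (n : ℕ) : Sym2 (Fin n) → ℕ :=
  Sym2.lift ⟨fun i j => Nat.pair (factorColor (slot i) (slot j))
      (factorColor (slot i) (slot j) * max (pageIndex i) (pageIndex j)),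
    fun i j => by simp only [factorColor_comm, max_comm]⟩

section BookGraph

variable {n : ℕ}

theorem mem_page {g : ℕ} {i : Fin n} : i ∈ page n g ↔ pageIndex i = 0 ∨ pageIndex i = g :=
  Finset.mem_filter_univ i

theorem slot_injOn_page (g : ℕ) : Set.InjOn (fun i : Fin n => slot i) (page n g) := by
  intro i hi j hj h
  simp only [Finset.mem_coe, mem_page, pageIndex] at hi hj
  simp only [slot, Fin.mk.injEq] at h
  split_ifs at h <;> omega

theorem exists_subset_page_of_isClique {s : Set (Fin n)} (hs : (bookGraph n).IsClique s) :
    ∃ g, s ⊆ page n g := by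
  by_cases hspine : ∀ i ∈ s, pageIndex i = 0
  · exact ⟨0, fun i hi => mem_page.2 (.inl (hspine i hi))⟩
  · push Not at hspine
    obtain ⟨j, hj, hj0⟩ := hspine
    refine ⟨pageIndex j, fun i hi => mem_page.2 ?_⟩
    rcases eq_or_ne i j with rfl | hij
    · exact .inr rfl
    · have := (hs hi hj hij).2
      omega

theorem slot_ne_of_bookGraph_adj {i j : Fin n} (h : (bookGraph n).Adj i j) :
    slot i ≠ slot j := by
  obtain ⟨g, hg⟩ := exists_subset_page_of_isClique (isClique_pair.2 fun _ => h)
  exact (slot_injOn_page g).ne (hg (by simp)) (hg (by simp)) h.ne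

theorem bookColor_eq_of_mem_page {g : ℕ} {i j : Fin n} (hi : i ∈ page n g) (hj : j ∈ page n g) :
    bookColor n s(i, j) = Nat.pair (factorColor (slot i) (slot j))
      (factorColor (slot i) (slot j) * g) := by
  rw [mem_page] at hi hj
  change Nat.pair _ (_ * max _ _) = _
  by_cases hspine : pageIndex i = 0 ∧ pageIndex j = 0
  · have hzero : factorColor (slot i) (slot j) = 0 :=
      (factorColor_spine _ _ (pageIndex_eq_zero_iff_slot.1 hspine.1)).2
        (pageIndex_eq_zero_iff_slot.1 hspine.2)
    simp only [hzero, Nat.zero_mul]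
  · rw [show max (pageIndex i) (pageIndex j) = g by omega]

theorem isProperEdgeColoring_bookColor : IsProperEdgeColoring (bookGraph n) (bookColor n) := by
  refine isProperEdgeColoring_iff.2 fun v i j hi hj heq => ?_
  obtain ⟨hfactor, hpalette⟩ := Nat.pair_eq_pair.1 heq
  have hslot : slot i = slot j := factorColor_right_injective _ _ _
    (slot_ne_of_bookGraph_adj hi) (slot_ne_of_bookGraph_adj hj) hfactor
  have hspine : pageIndex i = 0 ↔ pageIndex j = 0 := by
    rw [pageIndex_eq_zero_iff_slot, pageIndex_eq_zero_iff_slot, hslot]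
  have hpage : pageIndex i = pageIndex j := by
    by_contra hne
    have hv : pageIndex v = 0 := by
      have := hi.2
      have := hj.2
      omega
    have hcolor : factorColor (slot v) (slot i) ≠ 0 := by
      rw [Ne, factorColor_spine _ _ (pageIndex_eq_zero_iff_slot.1 hv),
        ← pageIndex_eq_zero_iff_slot]
      omega
    rw [← hfactor, hv, Nat.zero_max, Nat.zero_max] at hpalette
    exact hne (Nat.eq_of_mul_eq_mul_left (Nat.pos_of_ne_zero hcolor) hpalette)
  exact slot_injOn_page _ (mem_page.2 (.inr hpage)) (mem_page.2 (.inr rfl)) hslot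

theorem not_hasRainbowCopy_bookColor :
    ¬ HasRainbowCopy (bookGraph n) (⊤ : SimpleGraph (Fin 4)) (bookColor n) := by
  rw [isProperEdgeColoring_bookColor.hasRainbowCopy_top_fin_four_iff]
  rintro ⟨p, q, r, s, hadj, hpq, hpr, hps⟩
  have : Std.Symm (bookGraph n).Adj := (bookGraph n).symm
  obtain ⟨g, hg⟩ := exists_subset_page_of_isClique (s := {i | i ∈ [p, q, r, s]}) hadj.forall
  have hslot : [slot p, slot q, slot r, slot s].Pairwise (· ≠ ·) :=
    hadj.map (fun i : Fin n => slot i) fun _ _ => slot_ne_of_bookGraph_adj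
  have color_congr {i j k l : Fin n} (hi : i ∈ page n g) (hj : j ∈ page n g)
      (hk : k ∈ page n g) (hl : l ∈ page n g)
      (h : factorColor (slot i) (slot j) = factorColor (slot k) (slot l)) :
      bookColor n s(i, j) = bookColor n s(k, l) := by
    rw [bookColor_eq_of_mem_page hi hj, bookColor_eq_of_mem_page hk hl, h]
  have hp : p ∈ page n g := hg (by simp)
  have hq : q ∈ page n g := hg (by simp)
  have hr : r ∈ page n g := hg (by simp)
  have hs : s ∈ page n g := hg (by simp)
  rcases factorColor_matching _ _ _ _ hslot with h | h | h
  · exact hpq (color_congr hp hq hr hs h)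
  · exact hpr (color_congr hp hr hq hs h)
  · exact hps (color_congr hp hs hq hr h)

theorem isNClique_page {g : ℕ} (hg : 0 < g) (hgn : 4 * g + 2 ≤ n) :
    (bookGraph n).IsNClique 6 (page n g) := by
  refine ⟨fun i hi j hj hij => ?_, ?_⟩
  · rw [Finset.mem_coe, mem_page] at hi hj
    exact ⟨hij, by omega⟩
  · have hval : (page n g).map Fin.valEmbedding =
        Finset.range 2 ∪ Finset.Ico (4 * g - 2) (4 * g + 2) := by
      ext i
      simp only [Finset.mem_map, mem_page, pageIndex, Fin.valEmbedding_apply, Finset.mem_union,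
        Finset.mem_range, Finset.mem_Ico]
      constructor
      · rintro ⟨i, hi, rfl⟩
        omega
      · exact fun hi => ⟨⟨i, by omega⟩, by simp only; omega, rfl⟩
    rw [← Finset.card_map Fin.valEmbedding, hval, Finset.card_union_of_disjoint,
      Finset.card_range, Nat.card_Ico]
    · omega
    · rw [Finset.disjoint_left]
      intro i
      simp only [Finset.mem_range, Finset.mem_Ico]
      omega

theorem hasRainbowCopy_of_bookGraph_le {G : SimpleGraph (Fin n)} (hle : bookGraph n ≤ G)
    {u v : Fin n} (huv : G.Adj u v) (hnadj : ¬ (bookGraph n).Adj u v) {c : Sym2 (Fin n) → ℕ}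
    (hc : IsProperEdgeColoring G c) : HasRainbowCopy G (⊤ : SimpleGraph (Fin 4)) c := by
  wlog hlt : pageIndex u < pageIndex v generalizing u v
  · refine this huv.symm (fun h => hnadj h.symm) (lt_of_le_of_ne (not_lt.1 hlt) fun heq => ?_)
    exact hnadj ⟨huv.ne, .inr (.inr heq.symm)⟩
  have hu : pageIndex u ≠ 0 := fun h => hnadj ⟨huv.ne, .inl h⟩
  have hpage : 4 * pageIndex u + 2 ≤ n := by
    simp only [pageIndex] at hlt ⊢
    omega
  have ne_of_spine {w : Fin n} (hw : pageIndex w = 0) : w ≠ u := fun h => hu (h ▸ hw)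
  have adj_of_spine {w : Fin n} (hw : pageIndex w = 0) : G.Adj w v :=
    hle ⟨by rintro rfl; omega, .inl hw⟩
  let x : Fin n := ⟨0, by omega⟩
  let y : Fin n := ⟨1, by omega⟩
  have hx : pageIndex x = 0 := by simp [x, pageIndex]
  have hy : pageIndex y = 0 := by simp [y, pageIndex]
  exact hc.hasRainbowCopy_of_isNClique_six
    ((isNClique_page (Nat.pos_of_ne_zero hu) hpage).mono hle)
    (mem_page.2 (.inl hx)) (mem_page.2 (.inl hy)) (mem_page.2 (.inr rfl))
    (by simp [x, y]) (ne_of_spine hx) (ne_of_spine hy) (by rw [mem_page]; omega)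
    (adj_of_spine hx) (adj_of_spine hy) huv

theorem isRainbowSat_bookGraph : IsRainbowSat (bookGraph n) (⊤ : SimpleGraph (Fin 4)) := by
  refine ⟨⟨bookColor n, isProperEdgeColoring_bookColor, not_hasRainbowCopy_bookColor⟩, ?_⟩
  intro u v hne hnadj c hc
  exact hasRainbowCopy_of_bookGraph_le le_sup_left (by simp [hne]) hnadj hc

theorem degree_bookGraph_le [DecidableRel (bookGraph n).Adj] {i : Fin n} (hi : pageIndex i ≠ 0) :
    (bookGraph n).degree i ≤ 5 := by
  have hmem {j : Fin n} (hj : (bookGraph n).Adj i j) : j ∈ page n (pageIndex i) := by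
    have := hj.2
    rw [mem_page]
    omega
  rw [← card_neighborFinset_eq_degree, ← show (Finset.univ.erase (slot i)).card = 5 by simp]
  refine Finset.card_le_card_of_injOn (fun j => slot j) (fun j hj => ?_) ?_
  · rw [Finset.mem_coe, mem_neighborFinset] at hj
    simpa using (slot_ne_of_bookGraph_adj hj).symm
  · exact (slot_injOn_page _).mono fun j hj => hmem (by simpa using hj)

theorem two_mul_ncard_edgeSet_bookGraph_le (hn : 2 ≤ n) :
    2 * (bookGraph n).edgeSet.ncard + 12 ≤ 7 * n := by
  classical
  obtain ⟨m, rfl⟩ := Nat.exists_eq_add_of_le' hn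
  have hspine (i : Fin (m + 2)) : (bookGraph (m + 2)).degree i ≤ m + 1 := by
    simpa using Nat.le_sub_one_of_lt ((bookGraph (m + 2)).degree_lt_card_verts i)
  have hrest : ∑ i : Fin m, (bookGraph (m + 2)).degree i.succ.succ ≤ m * 5 := by
    simpa using Finset.sum_le_card_nsmul Finset.univ _ 5 fun i _ =>
      degree_bookGraph_le (i := Fin.succ (Fin.succ i)) (by simp [pageIndex])
  have hsum := (bookGraph (m + 2)).sum_degrees_eq_twice_card_edges
  rw [Fin.sum_univ_succ, Fin.sum_univ_succ] at hsum
  have hdeg₀ := hspine 0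
  have hdeg₁ := hspine (Fin.succ 0)
  rw [← coe_edgeFinset, Set.ncard_coe_finset]
  omega

end BookGraph

/-- For every `n ≥ 6` there is an `n`-vertex rainbow `K_4`-saturated
graph with at most `(7/2)n` edges. -/
theorem stmt_11 (n : ℕ) (hn : 6 ≤ n) :
    ∃ G : SimpleGraph (Fin n),
      IsRainbowSat G (⊤ : SimpleGraph (Fin 4)) ∧
      (G.edgeSet.ncard : ℝ) ≤ 7 / 2 * (n : ℝ) := by
  refine ⟨bookGraph n, isRainbowSat_bookGraph, ?_⟩
  have hcard : (2 * (bookGraph n).edgeSet.ncard + 12 : ℝ) ≤ 7 * n := by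
    exact_mod_cast two_mul_ncard_edgeSet_bookGraph_le (by omega : 2 ≤ n)
  linarith
end

section
/- Let k ≥ 5. If a graph G is rainbow P_k-saturated, then G has at most one connected component that is acyclic. Consequently, every n-vertex rainbow P_k-saturated graph has at least n − 1 edges. -/
/-! Suppose `G` had two acyclic components. In each of them take an end `u`, resp. `v`, of a longest
path. It has at most one incident edge, of color `α` say, and all paths on four vertices that start
there use the same middle edge, of color `β` say. Permuting the colors on one of the components
makes the two pairs `(α, β)` agree, and then the new edge `uv` may be given the color `β`. A rainbow
`P_k` through `uv` either continues on both sides, along two edges of color `α`, or it starts with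
`uv` and its third edge has color `β` again; so it does not use `uv` and was already present in `G`.

The edge bound follows because a connected graph that is not a tree has at least as many edges as
vertices. -/

open SimpleGraph

section Tree

variable {V : Type*} {G : SimpleGraph V} {r v x y w z a b : V}

lemma eq_of_adj_of_dist_le_of_isTree (hG : G.IsTree) (hxa : G.Adj x a) (hxb : G.Adj x b)
    (ha : G.dist r a ≤ G.dist r x) (hb : G.dist r b ≤ G.dist r x) : a = b := by
  classical
  obtain ⟨p, hp, -⟩ := hG.connected.exists_path_of_dist r x
  have eq_penultimate : ∀ a, G.Adj x a → G.dist r a ≤ G.dist r x → a = p.penultimate := by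
    intro a hxa ha
    obtain ⟨q, hq, hql⟩ := hG.connected.exists_path_of_dist r a
    have hxq : x ∉ q.support := by
      intro hx
      have := dist_le (q.takeUntil x hx)
      have := Walk.length_takeUntil_lt_length hx hxa.ne
      lia
    exact hG.isAcyclic.eq_penultimate_of_adj_end hp hxa
      (hG.isAcyclic.mem_support_of_ne_mem_support_of_adj_of_isPath hp hq hxa hxq)
  exact (eq_penultimate a hxa ha).trans (eq_penultimate b hxb hb).symm

lemma dist_le_of_path_from_farthest (hG : G.IsTree) (hv : ∀ x, G.dist r x ≤ G.dist r v)
    (hvy : G.Adj v y) (hyw : G.Adj y w) (hwz : G.Adj w z) (hzy : z ≠ y) :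
    G.dist r w ≤ G.dist r y := by
  by_contra! hlt
  have hz : G.dist r z ≤ G.dist r w := by
    have := hG.dist_eq_dist_add_one_of_adj r hvy
    have := hv z
    lia
  exact hzy (eq_of_adj_of_dist_le_of_isTree hG hwz hyw.symm hz hlt.le)

end Tree

section Components

variable {V : Type*} {G : SimpleGraph V}

/-- The connected component containing the edge `e`, used to recolor and to count edges component
by component. For a pair `e` that is not an edge, this is the component of an arbitrary one of its
entries. -/
noncomputable def edgeComponent (G : SimpleGraph V) (e : Sym2 V) : G.ConnectedComponent :=
  G.connectedComponentMk e.out.1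

lemma edgeComponent_eq_of_mem {e : Sym2 V} {a : V} (he : e ∈ G.edgeSet) (ha : a ∈ e) :
    edgeComponent G e = G.connectedComponentMk a := by
  obtain ⟨b, rfl⟩ := Sym2.mem_iff_exists.1 ha
  rcases Sym2.mem_iff.1 s(a, b).out_fst_mem with h | h
  · rw [edgeComponent, h]
  · rw [edgeComponent, h, ConnectedComponent.eq]
    exact (Adj.reachable he).symm

lemma ediam_induce_supp_ne_top (C : G.ConnectedComponent) [Finite C.supp] :
    (G.induce C.supp).ediam ≠ ⊤ :=
  have := C.nonempty_supp.to_subtype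
  connected_iff_ediam_ne_top.1 C.connected_toSimpleGraph

lemma sum_card_supp [Finite V] [Fintype G.ConnectedComponent] :
    ∑ C : G.ConnectedComponent, Nat.card C.supp = Nat.card V := by
  rw [← Nat.card_sigma]
  exact Nat.card_congr (Equiv.sigmaFiberEquiv G.connectedComponentMk)

lemma sum_card_edgeSet_induce_supp_le [Finite V] [Fintype G.ConnectedComponent] :
    ∑ C : G.ConnectedComponent, Nat.card (G.induce C.supp).edgeSet ≤ Nat.card G.edgeSet := by
  rw [← Nat.card_congr (Equiv.sigmaFiberEquiv fun e : G.edgeSet ↦ edgeComponent G e),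
    Nat.card_sigma]
  refine Finset.sum_le_sum fun C _ ↦ ?_
  let ι : G.induce C.supp ↪g G := Embedding.induce C.supp
  have edgeComponent_map (e : (G.induce C.supp).edgeSet) :
      edgeComponent G (ι.mapEdgeSet e) = C := by
    obtain ⟨⟨a, b⟩, he⟩ := e
    exact (edgeComponent_eq_of_mem (ι.mapEdgeSet _).2 (Sym2.mem_mk_left _ _)).trans a.2
  refine Nat.card_le_card_of_injective (fun e ↦ ⟨ι.mapEdgeSet e, edgeComponent_map e⟩) ?_
  exact fun e e' h ↦ ι.mapEdgeSet.injective (congrArg Subtype.val h)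

end Components

section EdgeBound

variable {V : Type*} {G : SimpleGraph V}

lemma card_le_card_edgeSet_add_ite [Finite V] [Decidable G.IsAcyclic] (hG : G.Connected) :
    Nat.card V ≤ Nat.card G.edgeSet + if G.IsAcyclic then 1 else 0 := by
  have hle := hG.card_vert_le_card_edgeSet_add_one
  split_ifs with hacyclic
  · exact hle
  · have hne : Nat.card G.edgeSet + 1 ≠ Nat.card V := fun h ↦
      hacyclic (isTree_iff_connected_and_card.2 ⟨hG, h⟩).isAcyclic
    lia

lemma card_le_card_edgeSet_add_one_of_unique_acyclic [Finite V]
    (h : {C : G.ConnectedComponent | (G.induce C.supp).IsAcyclic}.Subsingleton) :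
    Nat.card V ≤ Nat.card G.edgeSet + 1 := by
  classical
  have := Fintype.ofFinite G.ConnectedComponent
  calc Nat.card V = ∑ C : G.ConnectedComponent, Nat.card C.supp := sum_card_supp.symm
    _ ≤ ∑ C : G.ConnectedComponent, (Nat.card (G.induce C.supp).edgeSet +
          if (G.induce C.supp).IsAcyclic then 1 else 0) :=
      Finset.sum_le_sum fun C _ ↦ card_le_card_edgeSet_add_ite C.connected_toSimpleGraph
    _ ≤ Nat.card G.edgeSet + 1 := by
      rw [Finset.sum_add_distrib, ← Finset.card_filter]
      refine add_le_add sum_card_edgeSet_induce_supp_le (Finset.card_le_one.2 ?_)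
      exact fun C hC D hD ↦ h (Finset.mem_filter.1 hC).2 (Finset.mem_filter.1 hD).2

lemma finite_support_of_finite_edgeSet (h : G.edgeSet.Finite) : G.support.Finite := by
  classical
  refine (h.biUnion fun e _ ↦ e.toFinset.finite_toSet).subset ?_
  rintro v ⟨w, hvw⟩
  exact Set.mem_biUnion hvw (Sym2.mem_toFinset.2 (Sym2.mem_mk_left v w))

lemma supp_connectedComponentMk_of_isIsolated {v : V} (hv : G.IsIsolated v) :
    (G.connectedComponentMk v).supp = {v} := by
  refine Set.eq_singleton_iff_unique_mem.2 ⟨rfl, fun w hw ↦ ?_⟩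
  by_contra hne
  exact G.notMem_support_iff_isIsolated.2 hv
    (mem_support_of_reachable (Ne.symm hne) (ConnectedComponent.exact hw).symm)

lemma infinite_edgeSet_of_unique_finite_acyclic [Infinite V]
    (h : {C : G.ConnectedComponent |
      C.supp.Finite ∧ (G.induce C.supp).IsAcyclic}.Subsingleton) : G.edgeSet.Infinite := by
  intro hfin
  obtain ⟨x, hx, y, hy, hxy⟩ := (finite_support_of_finite_edgeSet hfin).infinite_compl.nontrivial
  have mem_of_notMem_support {v : V} (hv : v ∈ G.supportᶜ) : G.connectedComponentMk v ∈
      {C : G.ConnectedComponent | C.supp.Finite ∧ (G.induce C.supp).IsAcyclic} := by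
    have hsupp := supp_connectedComponentMk_of_isIsolated (G.notMem_support_iff_isIsolated.1 hv)
    rw [Set.mem_ofPred_eq, hsupp]
    exact ⟨Set.finite_singleton v, .of_subsingleton⟩
  have hreach : G.Reachable x y :=
    ConnectedComponent.exact (h (mem_of_notMem_support hx) (mem_of_notMem_support hy))
  exact hx (mem_support_of_reachable hxy hreach)

lemma card_le_encard_edgeSet_add_one_of_unique_finite_acyclic
    (h : {C : G.ConnectedComponent |
      C.supp.Finite ∧ (G.induce C.supp).IsAcyclic}.Subsingleton) :
    ENat.card V ≤ G.edgeSet.encard + 1 := by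
  cases finite_or_infinite V
  · have := card_le_card_edgeSet_add_one_of_unique_acyclic (G := G) fun C hC D hD ↦
      h ⟨C.supp.toFinite, hC⟩ ⟨D.supp.toFinite, hD⟩
    rw [Set.encard, ENat.card_eq_coe_natCard, ENat.card_eq_coe_natCard]
    exact_mod_cast this
  · simp [(infinite_edgeSet_of_unique_finite_acyclic h).encard_eq]

end EdgeBound

section LeafCondition

variable {W : Type*}

/-- Every leaf of `H` is the first vertex of a path on five vertices. Besides connectedness, this is
all that the argument needs to know about the graph `H = P_k`. -/
def EveryLeafStartsPathFive (H : SimpleGraph W) : Prop :=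
  ∀ ⦃i j⦄, H.neighborSet i = {j} →
    ∃ p q r, H.Adj j p ∧ H.Adj p q ∧ H.Adj q r ∧ [i, j, p, q, r].Nodup

lemma pathGraph_everyLeafStartsPathFive {k : ℕ} (hk : 5 ≤ k) :
    EveryLeafStartsPathFive (pathGraph k) := by
  intro i j hij
  have nbr_iff (x : Fin k) : (i.val + 1 = x ∨ x + 1 = i.val) ↔ x = j := by
    rw [← pathGraph_adj, ← mem_neighborSet, hij, Set.mem_singleton_iff]
  rcases (nbr_iff j).2 rfl with hj | hj
  · have hi : i.val = 0 := by
      by_contra hi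
      have := (nbr_iff ⟨i - 1, by lia⟩).1 (.inr (Nat.sub_one_add_one hi))
      lia
    refine ⟨⟨2, by lia⟩, ⟨3, by lia⟩, ⟨4, by lia⟩, ?_⟩
    simp only [pathGraph_adj, List.nodup_cons, List.mem_cons, List.not_mem_nil, List.nodup_nil,
      Fin.ext_iff, or_false, not_false_eq_true, and_true]
    lia
  · have hi : i + 1 = k := by
      by_contra hi
      have := (nbr_iff ⟨i + 1, by lia⟩).1 (.inl rfl)
      lia
    refine ⟨⟨i - 2, by lia⟩, ⟨i - 3, by lia⟩, ⟨i - 4, by lia⟩, ?_⟩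
    simp only [pathGraph_adj, List.nodup_cons, List.mem_cons, List.not_mem_nil, List.nodup_nil,
      Fin.ext_iff, or_false, not_false_eq_true, and_true]
    omega

end LeafCondition

section RainbowSaturation

variable {V W : Type} {G : SimpleGraph V} {H : SimpleGraph W} {c : Sym2 V → ℕ}

lemma isProperEdgeColoring_iff_s12 :
    IsProperEdgeColoring G c ↔
      ∀ x a b, G.Adj x a → G.Adj x b → a ≠ b → c s(x, a) ≠ c s(x, b) := by
  refine ⟨fun hc x a b hxa hxb hab ↦ hc _ hxa _ hxb (mt Sym2.congr_right.1 hab) ⟨x, by simp⟩, ?_⟩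
  rintro h e₁ h₁ e₂ h₂ hne ⟨x, hx₁, hx₂⟩
  obtain ⟨a, rfl⟩ := Sym2.mem_iff_exists.1 hx₁
  obtain ⟨b, rfl⟩ := Sym2.mem_iff_exists.1 hx₂
  exact h x a b h₁ h₂ (mt Sym2.congr_right.2 hne)

lemma hasRainbowCopy_iff :
    HasRainbowCopy G H c ↔ ∃ f : H.Copy G, Set.InjOn (fun e ↦ c (e.map f)) H.edgeSet := by
  constructor
  · rintro ⟨f, hf, hadj, hrainbow⟩
    exact ⟨⟨⟨f, hadj _ _⟩, hf⟩, fun e₁ h₁ e₂ h₂ ↦ not_imp_not.1 (hrainbow e₁ h₁ e₂ h₂)⟩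
  · rintro ⟨f, hf⟩
    exact ⟨f, f.injective, fun _ _ h ↦ f.toHom.map_adj h, fun e₁ h₁ e₂ h₂ ↦ hf.ne h₁ h₂⟩

section Recolor

/-- The edge-coloring obtained from `c` by permuting the colors on each connected component `C`
of `G` by `τ C`. -/
noncomputable def recolor (τ : G.ConnectedComponent → Equiv.Perm ℕ) (c : Sym2 V → ℕ) :
    Sym2 V → ℕ :=
  fun e ↦ τ (edgeComponent G e) (c e)

variable {τ : G.ConnectedComponent → Equiv.Perm ℕ}

lemma recolor_of_mem {e : Sym2 V} {a : V} (he : e ∈ G.edgeSet) (ha : a ∈ e) :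
    recolor τ c e = τ (G.connectedComponentMk a) (c e) := by
  rw [recolor, edgeComponent_eq_of_mem he ha]

lemma IsProperEdgeColoring.recolor (hc : IsProperEdgeColoring G c) :
    IsProperEdgeColoring G (recolor τ c) := by
  rintro e₁ h₁ e₂ h₂ hne ⟨x, hx₁, hx₂⟩
  rw [recolor_of_mem h₁ hx₁, recolor_of_mem h₂ hx₂]
  exact (τ _).injective.ne (hc e₁ h₁ e₂ h₂ hne ⟨x, hx₁, hx₂⟩)

lemma HasRainbowCopy.of_recolor (hH : H.Preconnected) (h : HasRainbowCopy G H (recolor τ c)) :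
    HasRainbowCopy G H c := by
  rw [hasRainbowCopy_iff] at h ⊢
  obtain ⟨f, hf⟩ := h
  refine ⟨f, fun e₁ h₁ e₂ h₂ (heq : c _ = c _) ↦ hf h₁ h₂ ?_⟩
  have edgeComponent_map {e : Sym2 W} (he : e ∈ H.edgeSet) :
      edgeComponent G (e.map f) = G.connectedComponentMk (f e.out.1) :=
    edgeComponent_eq_of_mem (f.toHom.map_mem_edgeSet he)
      (Sym2.mem_map.2 ⟨_, e.out_fst_mem, rfl⟩)
  have hsame : G.connectedComponentMk (f e₁.out.1) = G.connectedComponentMk (f e₂.out.1) :=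
    ConnectedComponent.sound ((hH _ _).map f.toHom)
  simp only [recolor, edgeComponent_map h₁, edgeComponent_map h₂, hsame, heq]

end Recolor

/-- Under the edge-coloring `c`, every edge at `v` has color `α`, and every middle edge `yw` of a
path `v, y, w, z`, where `z = v` is allowed, has another color `β`. Joining two such vertices by an
edge of color `β` creates no rainbow path on at least five vertices. -/
structure IsColoredEnd (G : SimpleGraph V) (c : Sym2 V → ℕ) (v : V) (α β : ℕ) : Prop where
  ne : α ≠ β
  color_adj : ∀ ⦃y⦄, G.Adj v y → c s(v, y) = α
  color_middle : ∀ ⦃y w z⦄, G.Adj v y → G.Adj y w → w ≠ v → G.Adj w z → z ≠ y → c s(y, w) = β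

variable {α β : ℕ}

lemma IsColoredEnd.recolor {v : V} (h : IsColoredEnd G c v α β)
    (τ : G.ConnectedComponent → Equiv.Perm ℕ) :
    IsColoredEnd G (recolor τ c) v
      (τ (G.connectedComponentMk v) α) (τ (G.connectedComponentMk v) β) where
  ne := (τ _).injective.ne h.ne
  color_adj y hvy := by
    rw [recolor_of_mem hvy (Sym2.mem_mk_left v y), h.color_adj hvy]
  color_middle y w z hvy hyw hwv hwz hzy := by
    rw [recolor_of_mem hyw (Sym2.mem_mk_left y w), h.color_middle hvy hyw hwv hwz hzy,
      ConnectedComponent.sound hvy.reachable]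

lemma IsColoredEnd.of_induce_supp {C : G.ConnectedComponent} {v : C.supp}
    (h : IsColoredEnd (G.induce C.supp) (fun e ↦ c (e.map (↑))) v α β) :
    IsColoredEnd G c v α β where
  ne := h.ne
  color_adj y hvy := h.color_adj (y := ⟨y, C.mem_supp_of_adj_mem_supp v.2 hvy⟩) hvy
  color_middle y w z hvy hyw hwv hwz hzy := by
    have hy := C.mem_supp_of_adj_mem_supp v.2 hvy
    have hw := C.mem_supp_of_adj_mem_supp hy hyw
    have hz := C.mem_supp_of_adj_mem_supp hw hwz
    exact h.color_middle (y := ⟨y, hy⟩) (w := ⟨w, hw⟩) (z := ⟨z, hz⟩) hvy hyw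
      (Subtype.coe_ne_coe.1 hwv) hwz (Subtype.coe_ne_coe.1 hzy)

lemma exists_isColoredEnd_of_isTree (hG : G.IsTree) (hdiam : G.ediam ≠ ⊤)
    (hc : IsProperEdgeColoring G c) : ∃ v α β, IsColoredEnd G c v α β := by
  have := hG.connected.nonempty
  obtain ⟨r, v, hrv⟩ := G.exists_dist_eq_diam
  have hv (x : V) : G.dist r x ≤ G.dist r v := hrv ▸ dist_le_diam hdiam
  have nbr_unique {y y' : V} (hy : G.Adj v y) (hy' : G.Adj v y') : y = y' :=
    eq_of_adj_of_dist_le_of_isTree hG hy hy' (hv y) (hv y')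
  by_cases hpath : ∃ y w z, G.Adj v y ∧ G.Adj y w ∧ w ≠ v ∧ G.Adj w z ∧ z ≠ y
  · obtain ⟨y, w, z, hvy, hyw, hwv, hwz, hzy⟩ := hpath
    refine ⟨v, c s(v, y), c s(y, w), ?_, fun y' hvy' ↦ by rw [nbr_unique hvy' hvy], ?_⟩
    · rw [Sym2.eq_swap]
      exact isProperEdgeColoring_iff_s12.1 hc y v w hvy.symm hyw hwv.symm
    · intro y' w' z' hvy' hyw' _ hwz' hzy'
      obtain rfl := nbr_unique hvy' hvy
      rw [eq_of_adj_of_dist_le_of_isTree hG hyw' hyw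
        (dist_le_of_path_from_farthest hG hv hvy hyw' hwz' hzy')
        (dist_le_of_path_from_farthest hG hv hvy hyw hwz hzy)]
  · obtain ⟨α, hα⟩ : ∃ α, ∀ y, G.Adj v y → c s(v, y) = α := by
      by_cases hnbr : ∃ y, G.Adj v y
      · obtain ⟨y, hvy⟩ := hnbr
        exact ⟨c s(v, y), fun y' hvy' ↦ by rw [nbr_unique hvy' hvy]⟩
      · exact ⟨0, fun y hvy ↦ (hnbr ⟨y, hvy⟩).elim⟩
    exact ⟨v, α, α + 1, by simp, hα, fun y w z hvy hyw hwv hwz hzy ↦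
      (hpath ⟨y, w, z, hvy, hyw, hwv, hwz, hzy⟩).elim⟩

lemma exists_isColoredEnd_of_isAcyclic_induce_supp {C : G.ConnectedComponent}
    (hC : (G.induce C.supp).IsAcyclic) (hdiam : (G.induce C.supp).ediam ≠ ⊤)
    (hc : IsProperEdgeColoring G c) : ∃ v ∈ C.supp, ∃ α β, IsColoredEnd G c v α β := by
  have hproper : IsProperEdgeColoring (G.induce C.supp) (fun e ↦ c (e.map (↑))) :=
    isProperEdgeColoring_iff_s12.2 fun x a b hxa hxb hab ↦
      isProperEdgeColoring_iff_s12.1 hc x a b hxa hxb (Subtype.coe_ne_coe.2 hab)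
  obtain ⟨v, α, β, h⟩ :=
    exists_isColoredEnd_of_isTree ⟨C.connected_toSimpleGraph, hC⟩ hdiam hproper
  exact ⟨v, v.2, α, β, h.of_induce_supp⟩

section NewEdge

variable {u v : V}

lemma adj_of_sup_edge_adj {a b : V} (h : (G ⊔ edge u v).Adj a b) (hne : s(a, b) ≠ s(u, v)) :
    G.Adj a b :=
  h.resolve_right fun hedge ↦ hne ((adj_edge ..).1 hedge).1.symm

variable [DecidableEq V]

lemma IsProperEdgeColoring.update_sup_edge (hc : IsProperEdgeColoring G c)
    (hu : IsColoredEnd G c u α β) (hv : IsColoredEnd G c v α β) :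
    IsProperEdgeColoring (G ⊔ edge u v) (Function.update c s(u, v) β) := by
  have new_ne : ∀ x a b, s(x, a) = s(u, v) → G.Adj x b → β ≠ c s(x, b) := by
    intro x a b hxa hxb
    rcases Sym2.eq_iff.1 hxa with ⟨rfl, -⟩ | ⟨rfl, -⟩
    · exact hu.color_adj hxb ▸ hu.ne.symm
    · exact hv.color_adj hxb ▸ hv.ne.symm
  rw [isProperEdgeColoring_iff_s12]
  intro x a b hxa hxb hab
  by_cases ha : s(x, a) = s(u, v) <;> by_cases hb : s(x, b) = s(u, v)
  · exact (hab (Sym2.congr_right.1 (ha.trans hb.symm))).elim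
  · rw [ha, Function.update_self, Function.update_of_ne hb]
    exact new_ne x a b ha (adj_of_sup_edge_adj hxb hb)
  · rw [hb, Function.update_self, Function.update_of_ne ha]
    exact (new_ne x b a hb (adj_of_sup_edge_adj hxa ha)).symm
  · rw [Function.update_of_ne ha, Function.update_of_ne hb]
    exact isProperEdgeColoring_iff_s12.1 hc x a b
      (adj_of_sup_edge_adj hxa ha) (adj_of_sup_edge_adj hxb hb) hab

variable {f : H.Copy (G ⊔ edge u v)}

lemma neighborSet_ne_singleton_of_rainbow (hH : EveryLeafStartsPathFive H)
    (hf : Set.InjOn (fun e ↦ Function.update c s(u, v) β (e.map f)) H.edgeSet)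
    {i j : W} (hij : s(f i, f j) = s(u, v)) (hj : IsColoredEnd G c (f j) α β) :
    H.neighborSet i ≠ {j} := by
  intro hleaf
  have hadj : H.Adj i j := by rw [← mem_neighborSet, hleaf, Set.mem_singleton_iff]
  obtain ⟨p, q, r, hjp, hpq, hqr, hnodup⟩ := hH hleaf
  simp only [List.nodup_cons, List.mem_cons, not_or] at hnodup
  obtain ⟨⟨-, hip, hiq, hir, -⟩, ⟨-, hjq, -⟩, ⟨-, hpr, -⟩, -⟩ := hnodup
  have ne_new {x y : W} (hx : i ≠ x) (hy : i ≠ y) : s(f x, f y) ≠ s(u, v) := by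
    intro h
    have hmem : f i ∈ s(f x, f y) := by
      rw [h, ← hij]
      exact Sym2.mem_mk_left _ _
    rcases Sym2.mem_iff.1 hmem with h | h
    exacts [hx (f.injective h), hy (f.injective h)]
  have adj_old {x y : W} (hxy : H.Adj x y) (hx : i ≠ x) (hy : i ≠ y) : G.Adj (f x) (f y) :=
    adj_of_sup_edge_adj (f.toHom.map_adj hxy) (ne_new hx hy)
  have hpq_color : c s(f p, f q) = β :=
    hj.color_middle (adj_old hjp hadj.ne hip) (adj_old hpq hip hiq)
      (f.injective.ne (Ne.symm hjq)) (adj_old hqr hiq hir) (f.injective.ne (Ne.symm hpr))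
  have hsame : s(i, j) = s(p, q) := hf hadj hpq <| by
    simp only [Sym2.map_mk, hij, Function.update_self]
    rw [Function.update_of_ne (ne_new hip hiq), hpq_color]
  rcases Sym2.eq_iff.1 hsame with ⟨h, -⟩ | ⟨h, -⟩
  exacts [hip h, hiq h]

lemma map_ne_new_edge_of_rainbow (hH : EveryLeafStartsPathFive H)
    (hu : IsColoredEnd G c u α β) (hv : IsColoredEnd G c v α β)
    (hf : Set.InjOn (fun e ↦ Function.update c s(u, v) β (e.map f)) H.edgeSet)
    {e : Sym2 W} (he : e ∈ H.edgeSet) : e.map f ≠ s(u, v) := by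
  induction e with | _ i j
  intro hij
  rw [Sym2.map_mk] at hij
  obtain ⟨hi, hj⟩ : IsColoredEnd G c (f i) α β ∧ IsColoredEnd G c (f j) α β := by
    rcases Sym2.eq_iff.1 hij with ⟨h₁, h₂⟩ | ⟨h₁, h₂⟩ <;> rw [h₁, h₂]
    exacts [⟨hu, hv⟩, ⟨hv, hu⟩]
  have exists_other_edge {i j : W} (hadj : H.Adj i j) (hij : s(f i, f j) = s(u, v))
      (hi : IsColoredEnd G c (f i) α β) (hj : IsColoredEnd G c (f j) α β) :
      ∃ x ≠ j, H.Adj i x ∧ Function.update c s(u, v) β s(f i, f x) = α := by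
    obtain ⟨x, hix, hxj⟩ : ∃ x, H.Adj i x ∧ x ≠ j := by
      by_contra! h
      exact neighborSet_ne_singleton_of_rainbow hH hf hij hj
        (Set.eq_singleton_iff_unique_mem.2 ⟨hadj, h⟩)
    have hne : s(f i, f x) ≠ s(u, v) := by
      rw [← hij]
      exact mt Sym2.congr_right.1 (f.injective.ne hxj)
    refine ⟨x, hxj, hix, ?_⟩
    rw [Function.update_of_ne hne]
    exact hi.color_adj (adj_of_sup_edge_adj (f.toHom.map_adj hix) hne)
  obtain ⟨x, hxj, hix, hx⟩ := exists_other_edge he hij hi hj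
  obtain ⟨y, -, hjy, hy⟩ := exists_other_edge he.symm (Sym2.eq_swap.trans hij) hj hi
  have hsame : s(i, x) = s(j, y) := hf hix hjy (hx.trans hy.symm)
  rcases Sym2.eq_iff.1 hsame with ⟨h, -⟩ | ⟨-, h⟩
  exacts [he.ne h, hxj h]

lemma HasRainbowCopy.of_update_sup_edge (hH : EveryLeafStartsPathFive H)
    (hu : IsColoredEnd G c u α β) (hv : IsColoredEnd G c v α β)
    (h : HasRainbowCopy (G ⊔ edge u v) H (Function.update c s(u, v) β)) :
    HasRainbowCopy G H c := by
  rw [hasRainbowCopy_iff] at h ⊢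
  obtain ⟨f, hf⟩ := h
  have hne {e : Sym2 W} (he : e ∈ H.edgeSet) : e.map f ≠ s(u, v) :=
    map_ne_new_edge_of_rainbow hH hu hv hf he
  have hadj {a b : W} (hab : H.Adj a b) : G.Adj (f a) (f b) :=
    adj_of_sup_edge_adj (f.toHom.map_adj hab) (hne (e := s(a, b)) hab)
  exact ⟨⟨⟨f, hadj⟩, f.injective⟩, hf.congr fun e he ↦ Function.update_of_ne (hne he) _ _⟩

end NewEdge

lemma IsRainbowSat.eq_of_isAcyclic_induce_supp (hH : H.Preconnected)
    (hleaf : EveryLeafStartsPathFive H) (hsat : IsRainbowSat G H) {c₁ c₂ : G.ConnectedComponent}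
    (hdiam₁ : (G.induce c₁.supp).ediam ≠ ⊤) (hdiam₂ : (G.induce c₂.supp).ediam ≠ ⊤)
    (h₁ : (G.induce c₁.supp).IsAcyclic) (h₂ : (G.induce c₂.supp).IsAcyclic) : c₁ = c₂ := by
  classical
  by_contra hne
  obtain ⟨⟨c, hc, hfree⟩, hadd⟩ := hsat
  obtain ⟨u, rfl, α, β, hu⟩ := exists_isColoredEnd_of_isAcyclic_induce_supp h₁ hdiam₁ hc
  obtain ⟨v, rfl, α', β', hv⟩ := exists_isColoredEnd_of_isAcyclic_induce_supp h₂ hdiam₂ hc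
  obtain ⟨σ, rfl, rfl⟩ : ∃ σ : Equiv.Perm ℕ, σ α' = α ∧ σ β' = β :=
    MulAction.is_two_pretransitive_iff.1 (Equiv.Perm.isMultiplyPretransitive ℕ 2) hv.ne hu.ne
  let τ : G.ConnectedComponent → Equiv.Perm ℕ := Pi.mulSingle (G.connectedComponentMk v) σ
  have hu' : IsColoredEnd G (recolor τ c) u (σ α') (σ β') := by
    simpa [τ, Pi.mulSingle_eq_of_ne hne] using hu.recolor τ
  have hv' : IsColoredEnd G (recolor τ c) v (σ α') (σ β') := by
    simpa [τ] using hv.recolor τ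
  have huv : u ≠ v := fun h ↦ hne (h ▸ rfl)
  have hnadj : ¬ G.Adj u v := fun h ↦ hne (ConnectedComponent.sound h.reachable)
  exact hfree <| .of_recolor hH <| .of_update_sup_edge hleaf hu' hv' <|
    hadd u v huv hnadj _ (hc.recolor.update_sup_edge hu' hv')

theorem stmt_12_general (hH : H.Preconnected) (hleaf : EveryLeafStartsPathFive H)
    (hsat : IsRainbowSat G H) :
    (∀ c₁ c₂ : G.ConnectedComponent,
      (G.induce c₁.supp).ediam ≠ ⊤ → (G.induce c₂.supp).ediam ≠ ⊤ →
      (G.induce c₁.supp).IsAcyclic → (G.induce c₂.supp).IsAcyclic → c₁ = c₂) ∧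
    ENat.card V ≤ G.edgeSet.encard + 1 := by
  have hunique {c₁ c₂ : G.ConnectedComponent} :=
    hsat.eq_of_isAcyclic_induce_supp hH hleaf (c₁ := c₁) (c₂ := c₂)
  refine ⟨fun _ _ ↦ hunique,
    card_le_encard_edgeSet_add_one_of_unique_finite_acyclic fun C hC D hD ↦ ?_⟩
  have := hC.1.to_subtype
  have := hD.1.to_subtype
  exact hunique (ediam_induce_supp_ne_top C) (ediam_induce_supp_ne_top D) hC.2 hD.2

end RainbowSaturation

/-- A rainbow `P_k`-saturated graph (`k ≥ 5`) has at most one acyclic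
connected component; consequently it has at least `n - 1` edges. -/
theorem stmt_12 (k n : ℕ) (hk : 5 ≤ k) (G : SimpleGraph (Fin n))
    (hsat : IsRainbowSat G (SimpleGraph.pathGraph k)) :
    (∀ c₁ c₂ : G.ConnectedComponent,
      (G.induce c₁.supp).IsAcyclic → (G.induce c₂.supp).IsAcyclic → c₁ = c₂) ∧
    n - 1 ≤ G.edgeSet.ncard := by
  obtain ⟨hunique, hcard⟩ :=
    stmt_12_general (pathGraph_preconnected k) (pathGraph_everyLeafStartsPathFive hk) hsat
  refine ⟨fun c₁ c₂ ↦ hunique c₁ c₂ (ediam_induce_supp_ne_top c₁) (ediam_induce_supp_ne_top c₂), ?_⟩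
  rw [ENat.card_eq_coe_natCard, Nat.card_fin, ← G.edgeSet.toFinite.cast_ncard_eq] at hcard
  exact Nat.sub_le_iff_le_add.2 (mod_cast hcard)
end
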